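/- Let m ≥ r ≥ 2 be integers and let F be a nondegenerate r-graph on m vertices. Suppose there exists a constant c > 0 such that for all sufficiently large n: (a) F is (c·C(n,r−1), ((1−π(F))/(4m))·C(n,r−1))-bounded, and (b) ex(n,F) is ((1−π(F))/(8m))·C(n,r−1)-smooth. Then there exists N_0 such that for all integers n ≥ N_0 and all integers t with 0 ≤ t ≤ min{ c·n/(4·e·r·m), (1−π(F))·n/(64·r·m²) }, one has EX(n,(t+1)F) = K_t^r ⋈ EX(n−t,F), and in particular ex(n,(t+1)F) = C(n,r) − C(n−t,r) + ex(n−t,F). -/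

import Mathlib

open Filter

namespace DensityCH

/-- An `r`-uniform hypergraph with vertices in `ℕ`:
a finite vertex set together with a set of `r`-element edges. -/
structure HGraph (r : ℕ) where
  verts : Finset ℕ
  edges : Finset (Finset ℕ)
  edges_sub : ∀ e ∈ edges, e ⊆ verts
  edges_card : ∀ e ∈ edges, e.card = r

namespace HGraph

/-- Build an `r`-graph from a vertex set and a set of candidate edges,
keeping exactly the well-formed candidates. -/
def ofEdges (r : ℕ) (V : Finset ℕ) (E : Finset (Finset ℕ)) : HGraph r where
  verts := V
  edges := E.filter fun e => e ⊆ V ∧ e.card = r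
  edges_sub := fun e he => ((Finset.mem_filter.mp he).2).1
  edges_card := fun e he => ((Finset.mem_filter.mp he).2).2

variable {r : ℕ}

/-- `H` contains a copy of `F`, i.e. a subgraph isomorphic to `F`. -/
def IsCopyIn (F H : HGraph r) : Prop :=
  ∃ f : ℕ → ℕ, Set.InjOn f ↑F.verts ∧ (∀ v ∈ F.verts, f v ∈ H.verts) ∧
    ∀ e ∈ F.edges, e.image f ∈ H.edges

/-- The subgraph of `H` induced on `S`. -/
def induce (H : HGraph r) (S : Finset ℕ) : HGraph r :=
  ofEdges r (H.verts ∩ S) (H.edges.filter fun e => e ⊆ S)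

/-- Delete a vertex from `H`. -/
def deleteVert (H : HGraph r) (v : ℕ) : HGraph r :=
  ofEdges r (H.verts.erase v) (H.edges.filter fun e => v ∉ e)

/-- The degree of a vertex. -/
def deg (H : HGraph r) (v : ℕ) : ℕ := (H.edges.filter fun e => v ∈ e).card

/-- The maximum degree `Δ(H)`. -/
def maxDeg (H : HGraph r) : ℕ := H.verts.sup H.deg

/-- The minimum degree `δ(H)`. -/
def minDeg (H : HGraph r) : ℕ :=
  if h : H.verts.Nonempty then H.verts.inf' h H.deg else 0

/-- The average degree `d(H) = r·|E(H)|/|V(H)|`. -/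
noncomputable def avgDeg (H : HGraph r) : ℝ :=
  (r : ℝ) * (H.edges.card : ℝ) / (H.verts.card : ℝ)

/-- `H` contains `k` pairwise vertex-disjoint copies of `F`, i.e. `ν(F,H) ≥ k`. -/
def HasMatching (F H : HGraph r) (k : ℕ) : Prop :=
  ∃ S : Fin k → Finset ℕ,
    (∀ i, S i ⊆ H.verts ∧ (S i).card = F.verts.card) ∧
    (∀ i j, i ≠ j → Disjoint (S i) (S j)) ∧
    ∀ i, F.IsCopyIn (H.induce (S i))

/-- Isomorphism of hypergraphs. -/
def Iso (G H : HGraph r) : Prop :=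
  ∃ f : ℕ → ℕ, Set.BijOn f ↑G.verts ↑H.verts ∧
    ∀ e ∈ Finset.powersetCard r G.verts, (e ∈ G.edges ↔ e.image f ∈ H.edges)

/-- The join `G ⋈ H`: all edges of `G`, all edges of `H`, and all `r`-sets meeting
both vertex sets. -/
def join (G H : HGraph r) : HGraph r :=
  ofEdges r (G.verts ∪ H.verts)
    (G.edges ∪ H.edges ∪ ((Finset.powersetCard r (G.verts ∪ H.verts)).filter
      fun e => (e ∩ G.verts).Nonempty ∧ (e ∩ H.verts).Nonempty))

end HGraph

/-- The complete `r`-graph on a vertex set `S`. -/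
def completeOn (r : ℕ) (S : Finset ℕ) : HGraph r :=
  HGraph.ofEdges r S (Finset.powersetCard r S)

/-- The `r`-graph on `V` with no edges. -/
def emptyOn (r : ℕ) (V : Finset ℕ) : HGraph r := HGraph.ofEdges r V ∅

/-- The Turán number `ex(n,F)`. -/
noncomputable def exN (r n : ℕ) (F : HGraph r) : ℕ :=
  sSup {m | ∃ H : HGraph r, H.verts.card = n ∧ ¬ F.IsCopyIn H ∧ H.edges.card = m}

/-- `d(n,F) = r·ex(n,F)/n`. -/
noncomputable def dN (r n : ℕ) (F : HGraph r) : ℝ := (r : ℝ) * (exN r n F : ℝ) / (n : ℝ)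

/-- `δ(n,F) = ex(n,F) − ex(n−1,F)` (as a real number). -/
noncomputable def deltaN (r n : ℕ) (F : HGraph r) : ℝ := (exN r n F : ℝ) - (exN r (n-1) F : ℝ)

/-- `x` is the Turán density `π(F)`, i.e. the limit of `ex(n,F)/C(n,r)`. -/
def HasTuranDensity (r : ℕ) (F : HGraph r) (x : ℝ) : Prop :=
  Tendsto (fun n : ℕ => (exN r n F : ℝ) / (n.choose r : ℝ)) atTop (nhds x)

/-- `ex(n,(t+1)F)`: the maximum number of edges of an `n`-vertex `r`-graph with no
`t+1` pairwise vertex-disjoint copies of `F`. -/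
noncomputable def exMatchN (r n t : ℕ) (F : HGraph r) : ℕ :=
  sSup {m | ∃ H : HGraph r, H.verts.card = n ∧ ¬ F.HasMatching H (t+1) ∧ H.edges.card = m}

/-- `H ∈ EX(n,F)`. -/
def IsExtremalFree (r n : ℕ) (F H : HGraph r) : Prop :=
  H.verts.card = n ∧ ¬ F.IsCopyIn H ∧ H.edges.card = exN r n F

/-- `H ∈ EX(n,(t+1)F)`. -/
def IsExtremalMatchingFree (r n t : ℕ) (F H : HGraph r) : Prop :=
  H.verts.card = n ∧ ¬ F.HasMatching H (t+1) ∧ H.edges.card = exMatchN r n t F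

/-- `F` is `(f1, f2)`-bounded at `n`. -/
def BoundedAt (r n : ℕ) (F : HGraph r) (f1 f2 : ℝ) : Prop :=
  ∀ H : HGraph r, H.verts.card = n → ¬ F.IsCopyIn H →
    dN r n F - f1 ≤ H.avgDeg → (H.maxDeg : ℝ) ≤ dN r n F + f2

/-- `ex(·,F)` is `g`-smooth at `n`: `|δ(n,F) − d(n−1,F)| ≤ g(n)`. -/
def SmoothAt (r n : ℕ) (F : HGraph r) (g : ℝ) : Prop :=
  |deltaN r n F - dN r (n-1) F| ≤ g

/-- The collection `H 0, …, H t` (on a common vertex set) has a rainbow `F`-matching. -/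
def HasRainbowMatching (r t : ℕ) (F : HGraph r) (H : Fin (t+1) → HGraph r) : Prop :=
  ∃ S : Fin (t+1) → Finset ℕ,
    (∀ i, S i ⊆ (H i).verts ∧ (S i).card = F.verts.card) ∧
    (∀ i j, i ≠ j → Disjoint (S i) (S j)) ∧
    ∀ i, F.IsCopyIn ((H i).induce (S i))

/-!  Patterns -/

/-- An `r`-uniform pattern: a finite index set together with a collection of
`r`-multisets on it. -/
structure Pattern (r : ℕ) where
  idx : Finset ℕ
  mE : Finset (Multiset ℕ)
  card_eq : ∀ s ∈ mE, Multiset.card s = r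
  mem_idx : ∀ s ∈ mE, ∀ i ∈ s, i ∈ idx

namespace Pattern

variable {r : ℕ}

/-- The pattern `P − i`. -/
def erase (P : Pattern r) (i : ℕ) : Pattern r where
  idx := P.idx.erase i
  mE := P.mE.filter fun s => i ∉ s
  card_eq := fun s hs => P.card_eq s (Finset.mem_filter.mp hs).1
  mem_idx := by
    intro s hs j hj
    have h1 := Finset.mem_filter.mp hs
    refine Finset.mem_erase.mpr ⟨?_, P.mem_idx s h1.1 j hj⟩
    rintro rfl
    exact h1.2 hj

/-- `H` is a `P`-construction: a blowup of the pattern `P`. -/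
def IsConstruction (P : Pattern r) (H : HGraph r) : Prop :=
  ∃ part : ℕ → ℕ, (∀ v ∈ H.verts, part v ∈ P.idx) ∧
    ∀ e : Finset ℕ, e ∈ H.edges ↔ (e ⊆ H.verts ∧ e.card = r ∧ Multiset.map part e.val ∈ P.mE)

/-- `H` is a `P`-subconstruction: a subgraph of a `P`-construction. -/
def IsSubconstruction (P : Pattern r) (H : HGraph r) : Prop :=
  ∃ G : HGraph r, P.IsConstruction G ∧ H.verts ⊆ G.verts ∧ H.edges ⊆ G.edges

end Pattern

/-- `Λ(P,n)`: the maximum number of edges of an `n`-vertex `P`-construction. -/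
noncomputable def patEx (r : ℕ) (P : Pattern r) (n : ℕ) : ℕ :=
  sSup {m | ∃ H : HGraph r, P.IsConstruction H ∧ H.verts.card = n ∧ H.edges.card = m}

/-- The Lagrangian `λ(P) = lim Λ(P,n)/C(n,r)`. -/
noncomputable def patLagrangian (r : ℕ) (P : Pattern r) : ℝ :=
  limUnder atTop fun n : ℕ => (patEx r P n : ℝ) / (n.choose r : ℝ)

/-- The pattern `P` is minimal: `λ(P−i) < λ(P)` for all `i`. -/
def Pattern.Minimal {r : ℕ} (P : Pattern r) : Prop :=
  ∀ i ∈ P.idx, patLagrangian r (P.erase i) < patLagrangian r P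

/-- `(F,P)` is a Turán pair. -/
def IsTuranPair (r : ℕ) (F : HGraph r) (P : Pattern r) : Prop :=
  (∀ H : HGraph r, P.IsConstruction H → ¬ F.IsCopyIn H) ∧
  (∀ H : HGraph r, ¬ F.IsCopyIn H → H.edges.card = exN r H.verts.card F →
    P.IsConstruction H)

/-- `F` is edge-stable with respect to `P` (with Turán density `π`). -/
def EdgeStable (r : ℕ) (F : HGraph r) (P : Pattern r) (π : ℝ) : Prop :=
  ∀ δ : ℝ, 0 < δ → ∃ N₀ : ℕ, ∃ ζ : ℝ, 0 < ζ ∧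
    ∀ H : HGraph r, N₀ ≤ H.verts.card → ¬ F.IsCopyIn H →
      (π - ζ) * (H.verts.card.choose r : ℝ) ≤ (H.edges.card : ℝ) →
      ∃ H' : HGraph r, H'.verts ⊆ H.verts ∧ H'.edges ⊆ H.edges ∧
        (π - δ) * (H.verts.card.choose r : ℝ) ≤ (H'.edges.card : ℝ) ∧
        P.IsSubconstruction H'

/-- `F` is weakly vertex-extendable with respect to `P` (with Turán density `π`). -/
def WeaklyVertexExtendable (r : ℕ) (F : HGraph r) (P : Pattern r) (π : ℝ) : Prop :=
  ∀ δ : ℝ, 0 < δ → ∃ N₀ : ℕ, ∃ ζ : ℝ, 0 < ζ ∧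
    ∀ H : HGraph r, N₀ ≤ H.verts.card → ¬ F.IsCopyIn H →
      (π - ζ) * (((H.verts.card - 1).choose (r-1) : ℕ) : ℝ) ≤ (H.minDeg : ℝ) →
      ∀ v ∈ H.verts, P.IsSubconstruction (H.deleteVert v) →
        (H.deg v : ℝ) ≤ (π + δ) * (((H.verts.card - 1).choose (r-1) : ℕ) : ℝ)

/-- `F` is degree-stable with respect to `P` (with Turán density `π`). -/
def DegreeStable (r : ℕ) (F : HGraph r) (P : Pattern r) (π : ℝ) : Prop :=
  ∃ ζ : ℝ, 0 < ζ ∧ ∃ N₀ : ℕ,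
    ∀ H : HGraph r, N₀ ≤ H.verts.card → ¬ F.IsCopyIn H →
      (π - ζ) * (((H.verts.card - 1).choose (r-1) : ℕ) : ℝ) ≤ (H.minDeg : ℝ) →
      P.IsSubconstruction H

/-!  Concrete constructions -/

/-- The generalized Turán graph `T_r(·,ℓ)` on vertex set `V` (parts are residue
classes mod `ℓ`; on an interval these are balanced). -/
def turanOn (r ℓ : ℕ) (V : Finset ℕ) : HGraph r :=
  HGraph.ofEdges r V ((Finset.powersetCard r V).filter
    fun e => ∀ u ∈ e, ∀ v ∈ e, u % ℓ = v % ℓ → u = v)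

/-- The `r`-graph on `V₁ ∪ V₂` whose edges are all `r`-sets meeting both parts. -/
def crossOn (r : ℕ) (V₁ V₂ : Finset ℕ) : HGraph r :=
  HGraph.ofEdges r (V₁ ∪ V₂) ((Finset.powersetCard r (V₁ ∪ V₂)).filter
    fun e => (e ∩ V₁).Nonempty ∧ (e ∩ V₂).Nonempty)

/-- The `r`-graph on `V₁ ∪ V₂` whose edges are all `r`-sets meeting `V₁` in an odd
number of vertices. -/
def oddCross (r : ℕ) (V₁ V₂ : Finset ℕ) : HGraph r :=
  HGraph.ofEdges r (V₁ ∪ V₂) ((Finset.powersetCard r (V₁ ∪ V₂)).filter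
    fun e => Odd (e ∩ V₁).card)

/-- The Fano plane. -/
def fano : HGraph 3 :=
  HGraph.ofEdges 3 (Finset.Icc 1 7)
    {({1,2,3} : Finset ℕ), {3,4,5}, {5,6,1}, {1,7,4}, {2,7,5}, {3,7,6}, {2,4,6}}

/-- The generalized triangle `𝕋_r`, with edges `{1,…,r}`, `{1,…,r−1,r+1}` and
`{r,…,2r−1}`. -/
def genTri (r : ℕ) : HGraph r :=
  HGraph.ofEdges r (Finset.Icc 1 (2*r - 1))
    {Finset.Icc 1 r, Finset.Icc 1 (r-1) ∪ {r+1}, Finset.Icc r (2*r - 1)}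

/-- `G` is a blowup of the `r`-graph `W` (viewing `W` as a pattern). -/
def IsBlowupOf {r : ℕ} (W G : HGraph r) : Prop :=
  ∃ part : ℕ → ℕ, (∀ v ∈ G.verts, part v ∈ W.verts) ∧
    ∀ e : Finset ℕ, e ∈ G.edges ↔
      (e ⊆ G.verts ∧ e.card = r ∧ ∃ f ∈ W.edges, Multiset.map part e.val = f.val)

/-- The expansion `H^F` of an `r`-graph `F`: for every pair of vertices not covered
by an edge of `F`, add an edge consisting of this pair plus `r−2` new vertices,
these sets of new vertices being pairwise disjoint. -/
def HGraph.expansion {r : ℕ} (F : HGraph r) : HGraph r :=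
  HGraph.ofEdges r
    (F.verts ∪ (((F.verts ×ˢ F.verts).filter fun p =>
        p.1 < p.2 ∧ ∀ e ∈ F.edges, ¬ (p.1 ∈ e ∧ p.2 ∈ e)).biUnion fun p =>
      (Finset.range (r-2)).image fun s =>
        (F.verts.sup id + 1) + (p.1 * (F.verts.sup id + 1) + p.2) * r + s))
    (F.edges ∪ (((F.verts ×ˢ F.verts).filter fun p =>
        p.1 < p.2 ∧ ∀ e ∈ F.edges, ¬ (p.1 ∈ e ∧ p.2 ∈ e)).image fun p =>
      insert p.1 (insert p.2 ((Finset.range (r-2)).image fun s =>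
        (F.verts.sup id + 1) + (p.1 * (F.verts.sup id + 1) + p.2) * r + s))))

/-- A `2`-graph is a tree on `k` vertices: `k` vertices, `k−1` edges, connected. -/
def IsTreeGraph (k : ℕ) (T : HGraph 2) : Prop :=
  T.verts.card = k ∧ T.edges.card = k - 1 ∧
  ∀ S : Finset ℕ, S ⊆ T.verts → S.Nonempty → S ≠ T.verts →
    ∃ e ∈ T.edges, (e ∩ S).Nonempty ∧ (e \ S).Nonempty

/-- `T` satisfies the Erdős–Sós property for `k`: every graph with average degree
greater than `k−2` contains `T`. -/
def ErdosSos (k : ℕ) (T : HGraph 2) : Prop :=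
  ∀ G : HGraph 2, ((k : ℝ) - 2) * (G.verts.card : ℝ) < 2 * (G.edges.card : ℝ) →
    T.IsCopyIn G

/-- The `(r−2)`-expansion `Exp(T)` of a `2`-graph `T`: enlarge every edge by one
common fixed set of `r−2` new vertices. -/
def expTree (r : ℕ) (T : HGraph 2) : HGraph r :=
  HGraph.ofEdges r
    (T.verts ∪ ((Finset.range (r-2)).image fun s => T.verts.sup id + 1 + s))
    (T.edges.image fun e =>
      e ∪ ((Finset.range (r-2)).image fun s => T.verts.sup id + 1 + s))

/-- The chromatic number of a `2`-graph. -/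
noncomputable def chrom (F : HGraph 2) : ℕ :=
  sInf {k | ∃ c : ℕ → ℕ, (∀ v ∈ F.verts, c v < k) ∧
    ∀ e ∈ F.edges, ∀ u ∈ e, ∀ v ∈ e, u ≠ v → c u ≠ c v}

/-- A graph is edge-critical if deleting some edge lowers its chromatic number. -/
def EdgeCritical (F : HGraph 2) : Prop :=
  ∃ e ∈ F.edges, chrom (HGraph.ofEdges 2 F.verts (F.edges.erase e)) < chrom F

/-- `H` is semibipartite: the vertex set splits into `V₁ ∪ V₂` so that every edge
has exactly one vertex in `V₁`. -/
def Semibipartite (r : ℕ) (H : HGraph r) : Prop :=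
  ∃ V₁ ⊆ H.verts, ∀ e ∈ H.edges, (e ∩ V₁).card = 1

/-- `H` is a `K_ℓ^r`-subconstruction, i.e. an `ℓ`-partite `r`-graph. -/
def IsKlSub (r ℓ : ℕ) (H : HGraph r) : Prop :=
  ∃ f : ℕ → ℕ, (∀ v ∈ H.verts, f v < ℓ) ∧
    ∀ e ∈ H.edges, ∀ u ∈ e, ∀ v ∈ e, f u = f v → u = v

/-- The Lagrangian `λ(W)` of an `r`-graph `W`, viewing `W` as a pattern. -/
noncomputable def hgLagrangian (r : ℕ) (W : HGraph r) : ℝ :=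
  limUnder atTop fun n : ℕ =>
    ((sSup {m | ∃ G : HGraph r, IsBlowupOf W G ∧ G.verts.card = n ∧ G.edges.card = m} : ℕ) : ℝ)
      / (n.choose r : ℝ)

/-- The `r`-graph `B(r,ℓ+1)`. -/
def BGraph (r ℓ : ℕ) : HGraph r :=
  HGraph.ofEdges r (Finset.Icc 1 (ℓ+1))
    (insert (Finset.Icc 1 r)
      ((Finset.powersetCard r (Finset.Icc 2 (ℓ+1))).filter
        fun e => (e ∩ Finset.Icc 2 r).card ≤ 1))

/-- The `r`-uniform matching of size two, `M_2^r`. -/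
def matching2 (r : ℕ) : HGraph r :=
  HGraph.ofEdges r (Finset.Icc 1 (2*r)) {Finset.Icc 1 r, Finset.Icc (r+1) (2*r)}

/-- The expanded triangle `𝓒_3^{2r}`. -/
def expandedTriangle (r : ℕ) : HGraph (2*r) :=
  HGraph.ofEdges (2*r) (Finset.Icc 1 (3*r))
    {Finset.Icc 1 (2*r), Finset.Icc (r+1) (3*r), Finset.Icc 1 r ∪ Finset.Icc (2*r+1) (3*r)}

/-- The `4`-graph `𝔽_{4,3}`. -/
def F43 : HGraph 4 :=
  HGraph.ofEdges 4 (Finset.Icc 1 7)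
    {({1,2,3,4} : Finset ℕ), {1,2,3,5}, {1,2,3,6}, {1,2,3,7}, {4,5,6,7}}

/-- The `3`-graph `𝔽_{3,2}`. -/
def F32 : HGraph 3 :=
  HGraph.ofEdges 3 (Finset.Icc 1 5)
    {({1,2,3} : Finset ℕ), {1,2,4}, {1,2,5}, {3,4,5}}

/-- `H` contains pairwise vertex-disjoint copies of `F i`, `ts i` many of each. -/
def HasMixedMatching (r k : ℕ) (F : Fin k → HGraph r) (ts : Fin k → ℕ)
    (H : HGraph r) : Prop :=
  ∃ S : (i : Fin k) → Fin (ts i) → Finset ℕ,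
    (∀ i j, S i j ⊆ H.verts ∧ (S i j).card = (F i).verts.card) ∧
    (∀ p q : Σ i : Fin k, Fin (ts i), p ≠ q → Disjoint (S p.1 p.2) (S q.1 q.2)) ∧
    ∀ i j, (F i).IsCopyIn (H.induce (S i j))

/-- `ex(n, ⊔ᵢ tᵢ Fᵢ)`. -/
noncomputable def exMixedN (r k : ℕ) (F : Fin k → HGraph r) (ts : Fin k → ℕ)
    (n : ℕ) : ℕ :=
  sSup {m | ∃ H : HGraph r, H.verts.card = n ∧ ¬ HasMixedMatching r k F ts H ∧
    H.edges.card = m}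

/-- `ex(n, {F₁,…,F_k})`. -/
noncomputable def exFamN (r k : ℕ) (F : Fin k → HGraph r) (n : ℕ) : ℕ :=
  sSup {m | ∃ H : HGraph r, H.verts.card = n ∧ (∀ i, ¬ (F i).IsCopyIn H) ∧
    H.edges.card = m}


namespace HGraph

variable {r : ℕ}

lemma edges_card_le (H : HGraph r) : H.edges.card ≤ H.verts.card.choose r := by
  rw [← Finset.card_powersetCard]
  apply Finset.card_le_card
  intro e he
  exact Finset.mem_powersetCard.mpr ⟨H.edges_sub e he, H.edges_card e he⟩

lemma mem_induce {H : HGraph r} {S e : Finset ℕ} :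
    e ∈ (H.induce S).edges ↔ e ∈ H.edges ∧ e ⊆ S := by
  unfold induce ofEdges
  simp only [Finset.mem_filter]
  constructor
  · rintro ⟨h, _⟩; exact h
  · rintro ⟨h1, h2⟩
    exact ⟨⟨h1, h2⟩, Finset.subset_inter (H.edges_sub e h1) h2, H.edges_card e h1⟩

lemma verts_induce {H : HGraph r} {S : Finset ℕ} : (H.induce S).verts = H.verts ∩ S := rfl

/-- Copies in induced subgraphs. -/
lemma copy_induce_iff {F H : HGraph r} {S : Finset ℕ} :
    F.IsCopyIn (H.induce S) ↔ ∃ f : ℕ → ℕ, Set.InjOn f ↑F.verts ∧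
      (∀ v ∈ F.verts, f v ∈ H.verts ∧ f v ∈ S) ∧ ∀ e ∈ F.edges, e.image f ∈ H.edges := by
  unfold IsCopyIn
  constructor
  · rintro ⟨f, h1, h2, h3⟩
    refine ⟨f, h1, fun v hv => ?_, fun e he => (mem_induce.mp (h3 e he)).1⟩
    have := h2 v hv
    rw [verts_induce, Finset.mem_inter] at this
    exact this
  · rintro ⟨f, h1, h2, h3⟩
    refine ⟨f, h1, fun v hv => ?_, fun e he => mem_induce.mpr ⟨h3 e he, ?_⟩⟩
    · rw [verts_induce, Finset.mem_inter]; exact h2 v hv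
    · intro x hx
      obtain ⟨v, hv, rfl⟩ := Finset.mem_image.mp hx
      exact (h2 v (F.edges_sub e he hv)).2

lemma copy_mono {F H : HGraph r} {S T : Finset ℕ} (hST : S ⊆ T)
    (h : F.IsCopyIn (H.induce S)) : F.IsCopyIn (H.induce T) := by
  rw [copy_induce_iff] at h ⊢
  obtain ⟨f, h1, h2, h3⟩ := h
  exact ⟨f, h1, fun v hv => ⟨(h2 v hv).1, hST (h2 v hv).2⟩, h3⟩

lemma copy_shrink {F H : HGraph r} {S : Finset ℕ}
    (h : F.IsCopyIn (H.induce S)) :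
    ∃ T, T ⊆ H.verts ∧ T ⊆ S ∧ T.card = F.verts.card ∧ F.IsCopyIn (H.induce T) := by
  rw [copy_induce_iff] at h
  obtain ⟨f, h1, h2, h3⟩ := h
  refine ⟨F.verts.image f, ?_, ?_, Finset.card_image_of_injOn h1, ?_⟩
  · intro x hx
    obtain ⟨v, hv, rfl⟩ := Finset.mem_image.mp hx
    exact (h2 v hv).1
  · intro x hx
    obtain ⟨v, hv, rfl⟩ := Finset.mem_image.mp hx
    exact (h2 v hv).2
  · rw [copy_induce_iff]
    exact ⟨f, h1, fun v hv => ⟨(h2 v hv).1, Finset.mem_image_of_mem f hv⟩, h3⟩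

/-- A set-family version of matchings, inside `W`. -/
def Mat (F H : HGraph r) (k : ℕ) (W : Finset ℕ) : Prop :=
  ∃ A : Finset (Finset ℕ), A.card = k ∧
    (∀ S ∈ A, S ⊆ H.verts ∧ S ⊆ W ∧ S.card = F.verts.card ∧ F.IsCopyIn (H.induce S)) ∧
    ∀ S ∈ A, ∀ T ∈ A, S ≠ T → Disjoint S T

lemma Mat.hasMatching {F H : HGraph r} {k : ℕ} {W : Finset ℕ} (h : Mat F H k W) :
    F.HasMatching H k := by
  obtain ⟨A, hk, h1, h2⟩ := h
  let e := A.equivFinOfCardEq hk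
  refine ⟨fun i => (e.symm i : Finset ℕ), fun i => ?_, fun i j hij => ?_, fun i => ?_⟩
  · have := h1 _ (e.symm i).2
    exact ⟨this.1, this.2.2.1⟩
  · apply h2 _ (e.symm i).2 _ (e.symm j).2
    intro h
    exact hij (e.symm.injective (Subtype.ext h))
  · exact (h1 _ (e.symm i).2).2.2.2

/-- Extend a matching by one more copy. -/
lemma Mat.extend {F H : HGraph r} (hF : 0 < F.verts.card) {W W' : Finset ℕ} {A : Finset (Finset ℕ)}
    (h1 : ∀ S ∈ A, S ⊆ H.verts ∧ S ⊆ W ∧ S.card = F.verts.card ∧ F.IsCopyIn (H.induce S))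
    (h2 : ∀ S ∈ A, ∀ T ∈ A, S ≠ T → Disjoint S T) (hW : W ⊆ W')
    (h : F.IsCopyIn (H.induce (W' \ A.biUnion id))) :
    Mat F H (A.card + 1) W' := by
  obtain ⟨T, hT1, hT2, hT3, hT4⟩ := copy_shrink h
  have hdis : ∀ S ∈ A, Disjoint S T := by
    intro S hS
    rw [Finset.disjoint_left]
    intro x hx hxT
    have := (Finset.mem_sdiff.mp (hT2 hxT)).2
    exact this (Finset.mem_biUnion.mpr ⟨S, hS, hx⟩)
  have hnot : T ∉ A := by
    intro hTA
    have := hdis T hTA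
    rw [disjoint_self] at this
    rw [this] at hT3
    simp at hT3
    rw [← hT3] at hF
    simp at hF
  refine ⟨insert T A, Finset.card_insert_of_notMem hnot, ?_, ?_⟩
  · intro S hS
    rcases Finset.mem_insert.mp hS with rfl | hS
    · exact ⟨hT1, hT2.trans Finset.sdiff_subset, hT3, hT4⟩
    · obtain ⟨a, b, c, d⟩ := h1 S hS
      exact ⟨a, b.trans hW, c, d⟩
  · intro S hS S' hS' hne
    rcases Finset.mem_insert.mp hS with h3 | h3 <;> rcases Finset.mem_insert.mp hS' with h4 | h4
    · exact absurd (h3.trans h4.symm) hne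
    · rw [h3]; exact (hdis S' h4).symm
    · rw [h4]; exact hdis S h3
    · exact h2 S h3 S' h4 hne

lemma mat_union_card {F H : HGraph r} {W : Finset ℕ} {A : Finset (Finset ℕ)}
    (h1 : ∀ S ∈ A, S ⊆ H.verts ∧ S ⊆ W ∧ S.card = F.verts.card ∧ F.IsCopyIn (H.induce S)) :
    (A.biUnion id).card ≤ A.card * F.verts.card := by
  apply Finset.card_biUnion_le_card_mul
  intro S hS
  exact (h1 S hS).2.2.1.le

/-- If there is no matching of size `k+1` in `W`, some `k*m` vertices of `W` cover all copies. -/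
lemma exists_cover {F H : HGraph r} (hF : 0 < F.verts.card) {k : ℕ} {W : Finset ℕ}
    (h : ¬ Mat F H (k+1) W) (hcard : k * F.verts.card ≤ W.card) :
    ∃ B ⊆ W, B.card = k * F.verts.card ∧ ¬ F.IsCopyIn (H.induce (W \ B)) := by
  classical
  have key : ∀ j, j ≤ k + 1 → Mat F H j W ∨ ∃ B ⊆ W, B.card ≤ k * F.verts.card ∧
      ¬ F.IsCopyIn (H.induce (W \ B)) := by
    intro j
    induction j with
    | zero => intro _; left; exact ⟨∅, rfl, by simp, by simp⟩
    | succ j ih =>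
      intro hj
      rcases ih (by omega) with hm | hB
      · obtain ⟨A, hA, h1, h2⟩ := hm
        by_cases hc : F.IsCopyIn (H.induce (W \ A.biUnion id))
        · left
          have := Mat.extend hF h1 h2 (Finset.Subset.refl W) hc
          rwa [hA] at this
        · right
          refine ⟨A.biUnion id, ?_, ?_, hc⟩
          · intro x hx
            obtain ⟨S, hS, hxS⟩ := Finset.mem_biUnion.mp hx
            exact (h1 S hS).2.1 hxS
          · refine (mat_union_card h1).trans ?_
            rw [hA]
            exact Nat.mul_le_mul_right _ (by omega)
      · exact Or.inr hB
  rcases key (k+1) le_rfl with h' | ⟨B, hBW, hBc, hBf⟩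
  · exact absurd h' h
  · obtain ⟨B', hBB', hB'W, hB'c⟩ := Finset.exists_subsuperset_card_eq hBW hBc hcard
    refine ⟨B', hB'W, hB'c, fun hc => hBf (copy_mono ?_ hc)⟩
    exact Finset.sdiff_subset_sdiff (Finset.Subset.refl _) hBB'

/-- A transversal bounds the matching number. -/
lemma no_matching_of_cover {F H : HGraph r} {L : Finset ℕ} {t : ℕ} (hL : L.card ≤ t)
    (hfree : ¬ F.IsCopyIn (H.induce (H.verts \ L))) : ¬ F.HasMatching H (t+1) := by
  rintro ⟨S, h1, h2, h3⟩
  have hmeet : ∀ i, ∃ x, x ∈ S i ∧ x ∈ L := by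
    intro i
    by_contra hcon
    push Not at hcon
    apply hfree
    refine copy_mono ?_ (h3 i)
    intro x hx
    exact Finset.mem_sdiff.mpr ⟨(h1 i).1 hx, hcon x hx⟩
  choose g hg1 hg2 using hmeet
  have hinj : Function.Injective g := by
    intro i j hij
    by_contra hne
    exact Finset.disjoint_left.mp (h2 i j hne) (hg1 i) (hij ▸ hg1 j)
  have : (Finset.univ : Finset (Fin (t+1))).card ≤ L.card :=
    Finset.card_le_card_of_injOn g (fun i _ => hg2 i) hinj.injOn
  simp at this
  omega

/-- Counting edges: removing `B` from `W`. -/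
lemma count_remove (H : HGraph r) (W B : Finset ℕ) :
    (H.induce W).edges.card ≤ (H.induce (W \ B)).edges.card + ∑ u ∈ B, H.deg u := by
  have hsub : (H.induce W).edges ⊆ (H.induce (W \ B)).edges ∪
      B.biUnion (fun u => H.edges.filter fun e => u ∈ e) := by
    intro e he
    rw [mem_induce] at he
    by_cases h : ∃ u ∈ B, u ∈ e
    · obtain ⟨u, hu, hue⟩ := h
      exact Finset.mem_union_right _ (Finset.mem_biUnion.mpr ⟨u, hu, Finset.mem_filter.mpr ⟨he.1, hue⟩⟩)
    · push Not at h
      refine Finset.mem_union_left _ (mem_induce.mpr ⟨he.1, fun x hx => ?_⟩)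
      exact Finset.mem_sdiff.mpr ⟨he.2 hx, fun hxB => h x hxB hx⟩
  refine (Finset.card_le_card hsub).trans ((Finset.card_union_le _ _).trans ?_)
  exact Nat.add_le_add_left Finset.card_biUnion_le _

lemma induce_verts_edges (H : HGraph r) : (H.induce H.verts).edges = H.edges := by
  ext e
  rw [mem_induce]
  exact ⟨fun h => h.1, fun h => ⟨h, H.edges_sub e h⟩⟩

/-- Number of edges containing a fixed set `T`. -/
lemma card_containing (H : HGraph r) {T : Finset ℕ} (hT : T ⊆ H.verts) :
    (H.edges.filter fun e => T ⊆ e).card ≤ (H.verts.card - T.card).choose (r - T.card) := by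
  rw [← Finset.card_sdiff_of_subset hT, ← Finset.card_powersetCard]
  apply Finset.card_le_card_of_injOn (fun e => e \ T)
  · intro e he
    rw [Finset.mem_coe, Finset.mem_filter] at he
    rw [Finset.mem_coe, Finset.mem_powersetCard]
    refine ⟨Finset.sdiff_subset_sdiff (H.edges_sub e he.1) (Finset.Subset.refl _), ?_⟩
    rw [Finset.card_sdiff_of_subset he.2, H.edges_card e he.1]
  · intro e he e' he' h
    rw [Finset.mem_coe, Finset.mem_filter] at he he'
    simp only at h
    rw [← Finset.sdiff_union_of_subset he.2, h, Finset.sdiff_union_of_subset he'.2]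

lemma deg_le (H : HGraph r) {v : ℕ} (hv : v ∈ H.verts) :
    H.deg v ≤ (H.verts.card - 1).choose (r - 1) := by
  have := H.card_containing (T := {v}) (by simpa using hv)
  simpa [deg] using this

lemma deg_induce (H : HGraph r) {v : ℕ} {U : Finset ℕ} (hv : v ∈ H.verts) (hvU : v ∉ U)
    (hU : U ⊆ H.verts) :
    H.deg v ≤ (H.induce (H.verts \ U)).deg v + U.card * (H.verts.card - 2).choose (r - 2) := by
  unfold deg
  have hsub : (H.edges.filter fun e => v ∈ e) ⊆
      ((H.induce (H.verts \ U)).edges.filter fun e => v ∈ e) ∪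
      U.biUnion (fun u => H.edges.filter fun e => {u, v} ⊆ e) := by
    intro e he
    rw [Finset.mem_filter] at he
    by_cases h : ∃ u ∈ U, u ∈ e
    · obtain ⟨u, hu, hue⟩ := h
      refine Finset.mem_union_right _ (Finset.mem_biUnion.mpr ⟨u, hu, Finset.mem_filter.mpr ⟨he.1, ?_⟩⟩)
      intro x hx
      simp only [Finset.mem_insert, Finset.mem_singleton] at hx
      rcases hx with rfl | rfl
      · exact hue
      · exact he.2
    · push Not at h
      refine Finset.mem_union_left _ (Finset.mem_filter.mpr ⟨mem_induce.mpr ⟨he.1, fun x hx => ?_⟩, he.2⟩)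
      exact Finset.mem_sdiff.mpr ⟨H.edges_sub e he.1 hx, fun hxB => h x hxB hx⟩
  refine (Finset.card_le_card hsub).trans ((Finset.card_union_le _ _).trans ?_)
  refine Nat.add_le_add_left (Finset.card_biUnion_le_card_mul _ _ _ ?_) _
  intro u hu
  have hne : u ≠ v := fun h => hvU (h ▸ hu)
  have hT : ({u, v} : Finset ℕ) ⊆ H.verts := by
    intro x hx
    simp only [Finset.mem_insert, Finset.mem_singleton] at hx
    rcases hx with rfl | rfl
    · exact hU hu
    · exact hv
  have := H.card_containing hT
  rwa [Finset.card_pair hne] at this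

/-- `r`-sets meeting `L`. -/
def meeting (r : ℕ) (V L : Finset ℕ) : Finset (Finset ℕ) :=
  Finset.powersetCard r V \ Finset.powersetCard r (V \ L)

lemma mem_meeting {V L e : Finset ℕ} :
    e ∈ meeting r V L ↔ e ⊆ V ∧ e.card = r ∧ (e ∩ L).Nonempty := by
  unfold meeting
  rw [Finset.mem_sdiff, Finset.mem_powersetCard, Finset.mem_powersetCard]
  constructor
  · rintro ⟨⟨h1, h2⟩, h3⟩
    refine ⟨h1, h2, ?_⟩
    by_contra hcon
    rw [Finset.not_nonempty_iff_eq_empty, ← Finset.disjoint_iff_inter_eq_empty] at hcon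
    exact h3 ⟨Finset.subset_sdiff.mpr ⟨h1, hcon⟩, h2⟩
  · rintro ⟨h1, h2, ⟨x, hx⟩⟩
    rw [Finset.mem_inter] at hx
    exact ⟨⟨h1, h2⟩, fun h => (Finset.mem_sdiff.mp (h.1 hx.1)).2 hx.2⟩

lemma card_meeting {V L : Finset ℕ} (hL : L ⊆ V) :
    (meeting r V L).card = V.card.choose r - (V.card - L.card).choose r := by
  unfold meeting
  rw [Finset.card_sdiff_of_subset (Finset.powersetCard_mono Finset.sdiff_subset),
    Finset.card_powersetCard, Finset.card_powersetCard, Finset.card_sdiff_of_subset hL]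

lemma split_edges (H : HGraph r) (L : Finset ℕ) :
    H.edges = (H.induce (H.verts \ L)).edges ∪ (H.edges ∩ meeting r H.verts L) := by
  ext e
  rw [Finset.mem_union, mem_induce, Finset.mem_inter, mem_meeting]
  constructor
  · intro he
    by_cases h : (e ∩ L).Nonempty
    · exact Or.inr ⟨he, H.edges_sub e he, H.edges_card e he, h⟩
    · rw [Finset.not_nonempty_iff_eq_empty, ← Finset.disjoint_iff_inter_eq_empty] at h
      exact Or.inl ⟨he, Finset.subset_sdiff.mpr ⟨H.edges_sub e he, h⟩⟩
  · rintro (h | h) <;> exact h.1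

lemma card_le_split (H : HGraph r) {L : Finset ℕ} (hL : L ⊆ H.verts) :
    H.edges.card ≤ (H.induce (H.verts \ L)).edges.card +
      (H.verts.card.choose r - (H.verts.card - L.card).choose r) := by
  rw [← card_meeting hL]
  conv_lhs => rw [split_edges H L]
  refine (Finset.card_union_le _ _).trans ?_
  exact Nat.add_le_add_left (Finset.card_le_card Finset.inter_subset_right) _

lemma all_of_card_eq (H : HGraph r) {L : Finset ℕ} (hL : L ⊆ H.verts)
    (h : (H.induce (H.verts \ L)).edges.card +
      (H.verts.card.choose r - (H.verts.card - L.card).choose r) ≤ H.edges.card) :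
    meeting r H.verts L ⊆ H.edges := by
  rw [← card_meeting hL] at h
  have h1 : H.edges.card ≤ (H.induce (H.verts \ L)).edges.card +
      (H.edges ∩ meeting r H.verts L).card := by
    conv_lhs => rw [split_edges H L]
    exact Finset.card_union_le _ _
  have h2 : (meeting r H.verts L).card ≤ (H.edges ∩ meeting r H.verts L).card := by omega
  have h3 := Finset.eq_of_subset_of_card_le (Finset.inter_subset_right) h2
  rw [← h3]
  exact Finset.inter_subset_left

/-- Relabelling. -/
def mapV (H : HGraph r) (f : ℕ → ℕ) (hf : Set.InjOn f ↑H.verts) : HGraph r where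
  verts := H.verts.image f
  edges := H.edges.image (fun e => e.image f)
  edges_sub := by
    intro e he
    obtain ⟨e', he', rfl⟩ := Finset.mem_image.mp he
    exact Finset.image_subset_image (H.edges_sub e' he')
  edges_card := by
    intro e he
    obtain ⟨e', he', rfl⟩ := Finset.mem_image.mp he
    rw [Finset.card_image_of_injOn (hf.mono (by exact_mod_cast H.edges_sub e' he')), H.edges_card e' he']

lemma image_inj_of {f : ℕ → ℕ} {V a b : Finset ℕ} (hf : Set.InjOn f ↑V) (ha : a ⊆ V) (hb : b ⊆ V)
    (h : a.image f = b.image f) : a = b := by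
  have h' : f '' (a : Set ℕ) = f '' (b : Set ℕ) := by
    rw [← Finset.coe_image, ← Finset.coe_image, h]
  have := (hf.image_eq_image_iff (by exact_mod_cast ha) (by exact_mod_cast hb)).mp h'
  exact_mod_cast this

lemma mapV_edges_card (H : HGraph r) (f : ℕ → ℕ) (hf : Set.InjOn f ↑H.verts) :
    (H.mapV f hf).edges.card = H.edges.card := by
  apply Finset.card_image_of_injOn
  intro a ha b hb h
  exact image_inj_of hf (H.edges_sub a ha) (H.edges_sub b hb) h

lemma mapV_mem_iff (H : HGraph r) (f : ℕ → ℕ) (hf : Set.InjOn f ↑H.verts) {e : Finset ℕ}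
    (he : e ⊆ H.verts) : e.image f ∈ (H.mapV f hf).edges ↔ e ∈ H.edges := by
  constructor
  · intro h
    obtain ⟨e', he', h'⟩ := Finset.mem_image.mp h
    rwa [← image_inj_of hf (H.edges_sub e' he') he h']
  · intro h
    exact Finset.mem_image_of_mem _ h

lemma mapV_copy {F H : HGraph r} (f : ℕ → ℕ) (hf : Set.InjOn f ↑H.verts)
    (h : F.IsCopyIn (H.mapV f hf)) : F.IsCopyIn H := by
  obtain ⟨g, h1, h2, h3⟩ := h
  have hinv : ∀ v ∈ F.verts, ∃ x ∈ H.verts, f x = g v := fun v hv => Finset.mem_image.mp (h2 v hv)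
  have hg : ∀ v ∈ F.verts, Function.invFunOn f (H.verts : Set ℕ) (g v) ∈ H.verts ∧
      f (Function.invFunOn f (H.verts : Set ℕ) (g v)) = g v := by
    intro v hv
    obtain ⟨x, hx, hxe⟩ := hinv v hv
    have hex : ∃ a ∈ (H.verts : Set ℕ), f a = g v := ⟨x, hx, hxe⟩
    exact ⟨Function.invFunOn_mem hex, Function.invFunOn_eq hex⟩
  refine ⟨fun v => Function.invFunOn f (H.verts : Set ℕ) (g v), ?_, fun v hv => (hg v hv).1, ?_⟩
  · intro a ha b hb hab
    apply h1 ha hb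
    rw [← (hg a ha).2, ← (hg b hb).2]
    exact congrArg f hab
  · intro e he
    have hsub : e.image (fun v => Function.invFunOn f (H.verts : Set ℕ) (g v)) ⊆ H.verts := by
      intro x hx
      obtain ⟨v, hv, rfl⟩ := Finset.mem_image.mp hx
      exact (hg v (F.edges_sub e he hv)).1
    rw [← mapV_mem_iff H f hf hsub, Finset.image_image]
    have : e.image (f ∘ fun v => Function.invFunOn f (H.verts : Set ℕ) (g v)) = e.image g := by
      apply Finset.image_congr
      intro v hv
      exact (hg v (F.edges_sub e he hv)).2
    rw [this]
    exact h3 e he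

end HGraph
section Extremal

variable {r : ℕ}

lemma exN_bdd (n : ℕ) (F : HGraph r) :
    BddAbove {m | ∃ H : HGraph r, H.verts.card = n ∧ ¬ F.IsCopyIn H ∧ H.edges.card = m} := by
  refine ⟨n.choose r, ?_⟩
  rintro x ⟨H, h1, -, h3⟩
  rw [← h3, ← h1]
  exact H.edges_card_le

lemma le_exN {n : ℕ} {F H : HGraph r} (h1 : H.verts.card = n) (h2 : ¬ F.IsCopyIn H) :
    H.edges.card ≤ exN r n F :=
  le_csSup (exN_bdd n F) ⟨H, h1, h2, rfl⟩

lemma emptyOn_free {F : HGraph r} (hF : F.edges.Nonempty) (V : Finset ℕ) :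
    ¬ F.IsCopyIn (emptyOn r V) := by
  rintro ⟨f, -, -, h⟩
  obtain ⟨e, he⟩ := hF
  have := h e he
  simp [emptyOn, HGraph.ofEdges] at this

lemma exists_exN (n : ℕ) {F : HGraph r} (hF : F.edges.Nonempty) :
    ∃ H : HGraph r, IsExtremalFree r n F H := by
  have hne : {m | ∃ H : HGraph r, H.verts.card = n ∧ ¬ F.IsCopyIn H ∧ H.edges.card = m}.Nonempty :=
    ⟨_, emptyOn r (Finset.range n), by simp [emptyOn, HGraph.ofEdges], emptyOn_free hF _, rfl⟩
  exact Nat.sSup_mem hne (exN_bdd n F)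

lemma exMatchN_bdd (n t : ℕ) (F : HGraph r) :
    BddAbove {m | ∃ H : HGraph r, H.verts.card = n ∧ ¬ F.HasMatching H (t+1) ∧
      H.edges.card = m} := by
  refine ⟨n.choose r, ?_⟩
  rintro x ⟨H, h1, -, h3⟩
  rw [← h3, ← h1]
  exact H.edges_card_le

lemma le_exMatchN {n t : ℕ} {F H : HGraph r} (h1 : H.verts.card = n)
    (h2 : ¬ F.HasMatching H (t+1)) : H.edges.card ≤ exMatchN r n t F :=
  le_csSup (exMatchN_bdd n t F) ⟨H, h1, h2, rfl⟩

lemma exists_exMatchN {n t : ℕ} {F H₀ : HGraph r} (h1 : H₀.verts.card = n)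
    (h2 : ¬ F.HasMatching H₀ (t+1)) :
    ∃ H : HGraph r, IsExtremalMatchingFree r n t F H := by
  have hne : {m | ∃ H : HGraph r, H.verts.card = n ∧ ¬ F.HasMatching H (t+1) ∧
    H.edges.card = m}.Nonempty := ⟨_, H₀, h1, h2, rfl⟩
  exact Nat.sSup_mem hne (exMatchN_bdd n t F)

/-- If `F` has no edges, its Turán density cannot be positive. -/
lemma edges_nonempty_of_density {F : HGraph r} {π : ℝ} (hπ : HasTuranDensity r F π)
    (hπ0 : 0 < π) : F.edges.Nonempty := by
  by_contra hne
  rw [Finset.not_nonempty_iff_eq_empty] at hne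
  have hz : ∀ n, F.verts.card ≤ n → exN r n F = 0 := by
    intro n hn
    have : {m | ∃ H : HGraph r, H.verts.card = n ∧ ¬ F.IsCopyIn H ∧ H.edges.card = m} = ∅ := by
      rw [Set.eq_empty_iff_forall_notMem]
      rintro x ⟨H, h1, h2, -⟩
      apply h2
      obtain ⟨T, hT, hTc⟩ := Finset.exists_subset_card_eq (s := H.verts) (n := F.verts.card) (by omega)
      let e : F.verts ≃ T := Fintype.equivOfCardEq (by simp [hTc])
      refine ⟨fun v => if h : v ∈ F.verts then (e ⟨v, h⟩ : ℕ) else 0, ?_, ?_, ?_⟩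
      · intro a ha b hb hab
        have ha' : a ∈ F.verts := ha
        have hb' : b ∈ F.verts := hb
        simp only [ha', hb', dite_true] at hab
        have := e.injective (Subtype.ext hab)
        exact congrArg Subtype.val this
      · intro v hv
        simp only [hv, dite_true]
        exact hT (e ⟨v, hv⟩).2
      · rw [hne]; simp
    unfold exN
    rw [this]
    simp
  have h0 : Tendsto (fun n : ℕ => (exN r n F : ℝ) / (n.choose r : ℝ)) atTop (nhds 0) := by
    apply tendsto_const_nhds.congr'
    filter_upwards [eventually_ge_atTop F.verts.card] with n hn
    simp [hz n hn]
  exact hπ0.ne' (tendsto_nhds_unique hπ h0)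

lemma mem_ofEdges {V e : Finset ℕ} {E : Finset (Finset ℕ)} :
    e ∈ (HGraph.ofEdges r V E).edges ↔ e ∈ E ∧ e ⊆ V ∧ e.card = r := Finset.mem_filter

lemma verts_ofEdges {V : Finset ℕ} {E : Finset (Finset ℕ)} :
    (HGraph.ofEdges r V E).verts = V := rfl

/-- Edges of the join with a complete graph. -/
lemma mem_join (hr : 0 < r) {t : ℕ} {G : HGraph r} {e : Finset ℕ} :
    e ∈ ((completeOn r (Finset.range t)).join G).edges ↔
      e ∈ G.edges ∨ e ∈ HGraph.meeting r (Finset.range t ∪ G.verts) (Finset.range t) := by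
  rw [HGraph.mem_meeting]
  unfold HGraph.join completeOn
  simp only [mem_ofEdges, verts_ofEdges, Finset.mem_union,
    Finset.mem_powersetCard]
  constructor
  · rintro ⟨h, h1, h2⟩
    rcases h with (h | h) | h
    · rcases Finset.eq_empty_or_nonempty e with rfl | hne
      · simp at h2; omega
      · right
        refine ⟨h1, h2, ?_⟩
        rw [Finset.inter_eq_left.mpr h.2.1]; exact hne
    · exact Or.inl h
    · exact Or.inr ⟨h1, h2, (Finset.mem_filter.mp h).2.1⟩
  · rintro (h | ⟨h1, h2, h3⟩)
    · exact ⟨Or.inl (Or.inr h), (G.edges_sub e h).trans Finset.subset_union_right, G.edges_card e h⟩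
    · refine ⟨?_, h1, h2⟩
      by_cases h4 : (e ∩ G.verts).Nonempty
      · exact Or.inr (Finset.mem_filter.mpr ⟨Finset.mem_powersetCard.mpr ⟨h1, h2⟩, h3, h4⟩)
      · left; left
        rw [Finset.not_nonempty_iff_eq_empty, ← Finset.disjoint_iff_inter_eq_empty] at h4
        have : e ⊆ Finset.range t := by
          intro x hx
          rcases Finset.mem_union.mp (h1 hx) with h | h
          · exact h
          · exact absurd h (Finset.disjoint_left.mp h4 hx)
        exact ⟨⟨this, h2⟩, this, h2⟩

lemma verts_join {t : ℕ} {G : HGraph r} :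
    ((completeOn r (Finset.range t)).join G).verts = Finset.range t ∪ G.verts := rfl

lemma card_join (hr : 0 < r) {t : ℕ} {G : HGraph r} (hd : Disjoint G.verts (Finset.range t)) :
    ((completeOn r (Finset.range t)).join G).edges.card =
      (t + G.verts.card).choose r - (G.verts.card).choose r + G.edges.card := by
  have h : ((completeOn r (Finset.range t)).join G).edges =
      HGraph.meeting r (Finset.range t ∪ G.verts) (Finset.range t) ∪ G.edges := by
    ext e
    rw [mem_join hr, Finset.mem_union, or_comm]
  have hdis : Disjoint (HGraph.meeting r (Finset.range t ∪ G.verts) (Finset.range t)) G.edges := by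
    rw [Finset.disjoint_left]
    intro e he heG
    rw [HGraph.mem_meeting] at he
    obtain ⟨x, hx⟩ := he.2.2
    rw [Finset.mem_inter] at hx
    exact Finset.disjoint_left.mp hd (G.edges_sub e heG hx.1) hx.2
  rw [h, Finset.card_union_of_disjoint hdis, HGraph.card_meeting Finset.subset_union_left,
    Finset.card_union_of_disjoint hd.symm, Finset.card_range]
  simp

/-- A graph isomorphic to a join with a complete graph has the right parameters. -/
lemma of_iso (hr : 0 < r) {n t : ℕ} (htn : t ≤ n) {F G H : HGraph r}
    (hG : IsExtremalFree r (n - t) F G) (hd : Disjoint G.verts (Finset.range t))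
    (hI : H.Iso ((completeOn r (Finset.range t)).join G)) :
    H.verts.card = n ∧ ¬ F.HasMatching H (t+1) ∧
      H.edges.card = n.choose r - (n - t).choose r + exN r (n - t) F := by
  obtain ⟨f, hbij, hedge⟩ := hI
  obtain ⟨hG1, hG2, hG3⟩ := hG
  rw [verts_join] at hbij
  have himg : H.verts.image f = Finset.range t ∪ G.verts := by
    have := hbij.image_eq
    exact_mod_cast this
  have hinj : Set.InjOn f ↑H.verts := hbij.injOn
  have hcard : H.verts.card = n := by
    rw [← Finset.card_image_of_injOn hinj, himg, Finset.card_union_of_disjoint hd.symm,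
      Finset.card_range, hG1]
    omega
  refine ⟨hcard, ?_, ?_⟩
  · apply HGraph.no_matching_of_cover (L := H.verts.filter fun v => f v < t)
    · rw [← Finset.card_range t]
      apply Finset.card_le_card_of_injOn f
      · intro v hv
        have := (Finset.mem_filter.mp hv).2
        simpa using this
      · exact hinj.mono (by exact_mod_cast Finset.filter_subset _ _)
    · intro hc
      rw [HGraph.copy_induce_iff] at hc
      obtain ⟨g, h1, h2, h3⟩ := hc
      have hnl : ∀ v ∈ F.verts, ¬ f (g v) < t := by
        intro v hv hlt
        have := (Finset.mem_sdiff.mp (h2 v hv).2).2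
        exact this (Finset.mem_filter.mpr ⟨(h2 v hv).1, hlt⟩)
      apply hG2
      refine ⟨f ∘ g, ?_, ?_, ?_⟩
      · intro a ha b hb hab
        exact h1 ha hb (hinj (h2 a ha).1 (h2 b hb).1 hab)
      · intro v hv
        have : f (g v) ∈ Finset.range t ∪ G.verts := by
          rw [← himg]; exact Finset.mem_image_of_mem f (h2 v hv).1
        rcases Finset.mem_union.mp this with h | h
        · exact absurd (Finset.mem_range.mp h) (hnl v hv)
        · exact h
      · intro e he
        have he' := h3 e he
        have := (hedge _ (Finset.mem_powersetCard.mpr ⟨H.edges_sub _ he', H.edges_card _ he'⟩)).mp he'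
        rw [mem_join hr, Finset.image_image] at this
        rcases this with h | h
        · exact h
        · rw [HGraph.mem_meeting] at h
          obtain ⟨x, hx⟩ := h.2.2
          rw [Finset.mem_inter] at hx
          obtain ⟨v, hv, rfl⟩ := Finset.mem_image.mp hx.1
          exact absurd (Finset.mem_range.mp hx.2) (hnl v (F.edges_sub e he hv))
  · have hE : (H.edges.image fun e => e.image f) = ((completeOn r (Finset.range t)).join G).edges := by
      ext e
      rw [Finset.mem_image]
      constructor
      · rintro ⟨e', he', rfl⟩
        exact (hedge _ (Finset.mem_powersetCard.mpr ⟨H.edges_sub _ he', H.edges_card _ he'⟩)).mp he'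
      · intro he
        have hsub := HGraph.edges_sub _ e he
        rw [verts_join, ← himg] at hsub
        obtain ⟨e', he's, he'⟩ := Finset.subset_image_iff.mp hsub
        refine ⟨e', ?_, he'⟩
        have hc : e'.card = r := by
          rw [← HGraph.edges_card _ e he, ← he', Finset.card_image_of_injOn]
          exact hinj.mono (by exact_mod_cast he's)
        have hs : e' ⊆ H.verts := by exact_mod_cast he's
        exact (hedge _ (Finset.mem_powersetCard.mpr ⟨hs, hc⟩)).mpr (he' ▸ he)
    have h1 : (H.edges.image fun e => e.image f).card = H.edges.card := by
      apply Finset.card_image_of_injOn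
      intro a ha b hb h
      exact HGraph.image_inj_of hinj (H.edges_sub a ha) (H.edges_sub b hb) h
    rw [← h1, hE, card_join hr hd, hG1, hG3]
    congr 3
    omega

/-- Relabelling so that `L` becomes `range t`. -/
lemma exists_relabel {V L : Finset ℕ} (hL : L ⊆ V) :
    ∃ f : ℕ → ℕ, Set.BijOn f ↑V ↑(Finset.range V.card) ∧
      ∀ v ∈ V, f v < L.card ↔ v ∈ L := by
  classical
  let e₁ := L.equivFin
  let e₂ := (V \ L).equivFin
  have hVL : (V \ L).card + L.card = V.card := Finset.card_sdiff_add_card_eq_card hL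
  let f : ℕ → ℕ := fun v => if h : v ∈ L then (e₁ ⟨v, h⟩ : ℕ) else
    if h : v ∈ V \ L then L.card + (e₂ ⟨v, h⟩ : ℕ) else 0
  have f1 : ∀ v (h : v ∈ L), f v = (e₁ ⟨v, h⟩ : ℕ) := by
    intro v h; simp only [f, h, dite_true]
  have f2 : ∀ v (h : v ∈ V \ L), f v = L.card + (e₂ ⟨v, h⟩ : ℕ) := by
    intro v h
    have h' := (Finset.mem_sdiff.mp h).2
    simp only [f, h', dite_false, h, dite_true]
  have hiff : ∀ v ∈ V, f v < L.card ↔ v ∈ L := by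
    intro v hv
    by_cases h : v ∈ L
    · rw [f1 v h]; simp [h]
    · rw [f2 v (Finset.mem_sdiff.mpr ⟨hv, h⟩)]; simp [h]
  have hmaps : Set.MapsTo f ↑V ↑(Finset.range V.card) := by
    intro v hv
    have hv' : v ∈ V := hv
    rw [Finset.mem_coe, Finset.mem_range]
    by_cases h : v ∈ L
    · have := (hiff v hv').mpr h
      omega
    · rw [f2 v (Finset.mem_sdiff.mpr ⟨hv', h⟩)]
      have := (e₂ ⟨v, Finset.mem_sdiff.mpr ⟨hv', h⟩⟩).2
      omega
  have hinj : Set.InjOn f ↑V := by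
    intro a ha b hb hab
    have ha' : a ∈ V := ha
    have hb' : b ∈ V := hb
    by_cases h : a ∈ L
    · have hbL : b ∈ L := by
        rw [← hiff b hb', ← hab, hiff a ha']; exact h
      rw [f1 a h, f1 b hbL] at hab
      exact congrArg Subtype.val (e₁.injective (Fin.ext hab))
    · have hbL : b ∉ L := by
        rw [← hiff b hb', ← hab, hiff a ha']; exact h
      rw [f2 a (Finset.mem_sdiff.mpr ⟨ha', h⟩), f2 b (Finset.mem_sdiff.mpr ⟨hb', hbL⟩)] at hab
      exact congrArg Subtype.val (e₂.injective (Fin.ext (Nat.add_left_cancel hab)))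
  refine ⟨f, ⟨hmaps, hinj, ?_⟩, hiff⟩
  exact Finset.surjOn_of_injOn_of_card_le f hmaps hinj (by simp)

/-- Structure when a cover exists and the edge count is large. -/
lemma to_iso (hr : 0 < r) {n t : ℕ} {F H : HGraph r} (hn : H.verts.card = n)
    {L : Finset ℕ} (hL : L ⊆ H.verts) (hLt : L.card = t)
    (hfree : ¬ F.IsCopyIn (H.induce (H.verts \ L)))
    (hcard : n.choose r - (n - t).choose r + exN r (n - t) F ≤ H.edges.card) :
    ∃ G : HGraph r, IsExtremalFree r (n - t) F G ∧ Disjoint G.verts (Finset.range t) ∧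
      H.Iso ((completeOn r (Finset.range t)).join G) := by
  obtain ⟨f, hbij, hf⟩ := exists_relabel hL
  have hinj : Set.InjOn f ↑H.verts := hbij.injOn
  have himg : H.verts.image f = Finset.range n := by
    have := hbij.image_eq
    rw [hn] at this
    exact_mod_cast this
  have hV : (H.induce (H.verts \ L)).verts = H.verts \ L := by
    rw [HGraph.verts_induce]; exact Finset.inter_eq_right.mpr Finset.sdiff_subset
  have hinj' : Set.InjOn f ↑(H.induce (H.verts \ L)).verts := by
    rw [hV]; exact hinj.mono (by exact_mod_cast Finset.sdiff_subset)
  have hVc : (H.induce (H.verts \ L)).verts.card = n - t := by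
    rw [hV, Finset.card_sdiff_of_subset hL, hn, hLt]
  have hle := le_exN hVc hfree
  have hsplit := H.card_le_split hL
  rw [hn, hLt] at hsplit
  have hall : HGraph.meeting r H.verts L ⊆ H.edges := by
    apply H.all_of_card_eq hL
    rw [hn, hLt]; omega
  have heq : (H.induce (H.verts \ L)).edges.card = exN r (n - t) F := by omega
  set G := (H.induce (H.verts \ L)).mapV f hinj' with hGdef
  have hGv : G.verts = (H.verts \ L).image f := by rw [← hV]; rfl
  have hdisj : Disjoint G.verts (Finset.range t) := by
    rw [hGv, Finset.disjoint_left]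
    intro x hx hxt
    obtain ⟨v, hv, rfl⟩ := Finset.mem_image.mp hx
    rw [Finset.mem_sdiff] at hv
    rw [Finset.mem_range, ← hLt, hf v hv.1] at hxt
    exact hv.2 hxt
  have hunion : Finset.range t ∪ G.verts = Finset.range n := by
    ext x
    rw [Finset.mem_union, ← himg, hGv]
    constructor
    · rintro (h | h)
      · rw [himg]
        have htn : t ≤ n := by rw [← hLt, ← hn]; exact Finset.card_le_card hL
        exact Finset.mem_range.mpr (lt_of_lt_of_le (Finset.mem_range.mp h) htn)
      · exact Finset.image_subset_image Finset.sdiff_subset h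
    · intro h
      obtain ⟨v, hv, rfl⟩ := Finset.mem_image.mp h
      by_cases hvL : v ∈ L
      · left
        rw [Finset.mem_range, ← hLt, hf v hv]; exact hvL
      · right
        exact Finset.mem_image_of_mem f (Finset.mem_sdiff.mpr ⟨hv, hvL⟩)
  refine ⟨G, ⟨?_, ?_, ?_⟩, hdisj, f, ?_, ?_⟩
  · have : G.verts.card = (H.induce (H.verts \ L)).verts.card := Finset.card_image_of_injOn hinj'
    rw [this, hVc]
  · intro hc
    exact hfree (HGraph.mapV_copy f hinj' hc)
  · rw [HGraph.mapV_edges_card, heq]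
  · rw [verts_join, hunion, ← hn]; exact hbij
  · intro e he
    rw [Finset.mem_powersetCard] at he
    rw [mem_join hr, hunion]
    have hes : e.image f ⊆ Finset.range n := by rw [← himg]; exact Finset.image_subset_image he.1
    have hec : (e.image f).card = r := by
      rw [Finset.card_image_of_injOn (hinj.mono (by exact_mod_cast he.1)), he.2]
    by_cases hm : (e ∩ L).Nonempty
    · have h1 : e ∈ H.edges := hall (HGraph.mem_meeting.mpr ⟨he.1, he.2, hm⟩)
      simp only [h1, true_iff]
      right
      rw [HGraph.mem_meeting]
      refine ⟨hes, hec, ?_⟩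
      obtain ⟨x, hx⟩ := hm
      rw [Finset.mem_inter] at hx
      refine ⟨f x, Finset.mem_inter.mpr ⟨Finset.mem_image_of_mem f hx.1, ?_⟩⟩
      rw [Finset.mem_range, ← hLt, hf x (he.1 hx.1)]
      exact hx.2
    · rw [Finset.not_nonempty_iff_eq_empty, ← Finset.disjoint_iff_inter_eq_empty] at hm
      have hsd : e ⊆ H.verts \ L := Finset.subset_sdiff.mpr ⟨he.1, hm⟩
      have h1 : e.image f ∈ G.edges ↔ e ∈ H.edges := by
        rw [HGraph.mapV_mem_iff _ f hinj' (by rw [hV]; exact hsd), HGraph.mem_induce]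
        exact ⟨fun h => h.1, fun h => ⟨h, hsd⟩⟩
      rw [h1]
      constructor
      · exact Or.inl
      · rintro (h | h)
        · exact h
        · exfalso
          rw [HGraph.mem_meeting] at h
          obtain ⟨x, hx⟩ := h.2.2
          rw [Finset.mem_inter] at hx
          obtain ⟨v, hv, rfl⟩ := Finset.mem_image.mp hx.1
          have := hx.2
          rw [Finset.mem_range, ← hLt, hf v (he.1 hv)] at this
          exact Finset.disjoint_left.mp hm hv this

/-- An extremal graph with vertices avoiding `range t`. -/
lemma exists_extremal_disjoint (k t : ℕ) {F : HGraph r} (hF : F.edges.Nonempty) :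
    ∃ G : HGraph r, IsExtremalFree r k F G ∧ Disjoint G.verts (Finset.range t) := by
  obtain ⟨H, h1, h2, h3⟩ := exists_exN k hF
  have hinj : Set.InjOn (fun v => v + t) (H.verts : Set ℕ) := fun a _ b _ h => by simpa using h
  refine ⟨H.mapV _ hinj, ⟨?_, fun hc => h2 (HGraph.mapV_copy _ hinj hc), ?_⟩, ?_⟩
  · rw [← h1]; exact Finset.card_image_of_injOn hinj
  · rw [HGraph.mapV_edges_card, h3]
  · rw [Finset.disjoint_left]
    intro x hx hxt
    obtain ⟨v, hv, rfl⟩ := Finset.mem_image.mp hx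
    simp at hxt

lemma iso_refl (H : HGraph r) : H.Iso H :=
  ⟨id, Set.bijOn_id _, fun e _ => by simp⟩

/-- The conclusion of the theorem from the existence of covers. -/
lemma conclude (hr : 0 < r) {n t : ℕ} (htn : t ≤ n) {F : HGraph r} (hF : F.edges.Nonempty)
    (key : ∀ H : HGraph r, H.verts.card = n → ¬ F.HasMatching H (t+1) →
      n.choose r - (n - t).choose r + exN r (n - t) F ≤ H.edges.card →
      ∃ L ⊆ H.verts, L.card = t ∧ ¬ F.IsCopyIn (H.induce (H.verts \ L))) :
    (∀ H : HGraph r, IsExtremalMatchingFree r n t F H ↔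
          ∃ G : HGraph r, IsExtremalFree r (n - t) F G ∧
            Disjoint G.verts (Finset.range t) ∧
            H.Iso ((completeOn r (Finset.range t)).join G)) ∧
      exMatchN r n t F = n.choose r - (n - t).choose r + exN r (n - t) F := by
  obtain ⟨G₀, hG₀, hd₀⟩ := exists_extremal_disjoint (n - t) t hF
  obtain ⟨j1, j2, j3⟩ := of_iso hr htn hG₀ hd₀ (iso_refl _)
  have hlow := le_exMatchN j1 j2
  rw [j3] at hlow
  have hval : exMatchN r n t F = n.choose r - (n - t).choose r + exN r (n - t) F := by
    obtain ⟨H, h1, h2, h3⟩ := exists_exMatchN j1 j2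
    obtain ⟨L, hL, hLt, hfree⟩ := key H h1 h2 (by rw [h3]; exact hlow)
    obtain ⟨G, hG, hd, hI⟩ := to_iso hr h1 hL hLt hfree (by rw [h3]; exact hlow)
    rw [← h3]
    exact (of_iso hr htn hG hd hI).2.2
  refine ⟨fun H => ⟨?_, ?_⟩, hval⟩
  · rintro ⟨h1, h2, h3⟩
    obtain ⟨L, hL, hLt, hfree⟩ := key H h1 h2 (by rw [h3]; exact hlow)
    exact to_iso hr h1 hL hLt hfree (by rw [h3]; exact hlow)
  · rintro ⟨G, hG, hd, hI⟩
    obtain ⟨k1, k2, k3⟩ := of_iso hr htn hG hd hI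
    exact ⟨k1, k2, by rw [k3, hval]⟩

end Extremal
section Numeric

lemma ch1 {n k : ℕ} (hn : 1 ≤ n) (hk : 1 ≤ k) :
    (n : ℝ) * ((n - 1).choose (k - 1) : ℝ) = k * (n.choose k : ℝ) := by
  obtain ⟨a, rfl⟩ : ∃ a, n = a + 1 := ⟨n - 1, by omega⟩
  obtain ⟨b, rfl⟩ : ∃ b, k = b + 1 := ⟨k - 1, by omega⟩
  have := Nat.add_one_mul_choose_eq a b
  rw [Nat.add_sub_cancel, Nat.add_sub_cancel]
  rw [mul_comm ((b + 1 : ℕ) : ℝ)]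
  exact_mod_cast this

lemma ch2 {n u k : ℕ} (hu : u ≤ n) (hk : 1 ≤ k) :
    n.choose k ≤ (n - u).choose k + u * (n - 1).choose (k - 1) := by
  induction u with
  | zero => simp
  | succ u ih =>
    have h1 := ih (by omega)
    obtain ⟨a, ha⟩ : ∃ a, n - u = a + 1 := ⟨n - u - 1, by omega⟩
    obtain ⟨b, rfl⟩ : ∃ b, k = b + 1 := ⟨k - 1, by omega⟩
    have h2 : n - (u + 1) = a := by omega
    have h3 := Nat.choose_succ_succ a b
    simp only [Nat.succ_eq_add_one] at h3
    rw [ha] at h1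
    rw [h2]
    rw [Nat.add_sub_cancel] at h1 ⊢
    have h4 : a.choose b ≤ (n - 1).choose b := Nat.choose_le_choose b (by omega)
    have h5 : (u + 1) * (n - 1).choose b = u * (n - 1).choose b + (n - 1).choose b := by ring
    omega

lemma ch3 {n u k : ℕ} (hu : u ≤ n) (hn : 1 ≤ n) (hk : 1 ≤ k) :
    (n.choose k : ℝ) * (1 - u * k / n) ≤ ((n - u).choose k : ℝ) := by
  have h2 : (n.choose k : ℝ) ≤ ((n - u).choose k : ℝ) + u * ((n - 1).choose (k - 1) : ℝ) := by
    exact_mod_cast ch2 hu hk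
  have h1 := ch1 hn hk
  have hn' : (0 : ℝ) < n := by exact_mod_cast hn
  have h3 : ((n - 1).choose (k - 1) : ℝ) = k * (n.choose k : ℝ) / n := by
    field_simp
    linarith
  rw [h3] at h2
  have h4 : (n.choose k : ℝ) * (1 - u * k / n) = n.choose k - u * (k * (n.choose k : ℝ) / n) := by
    ring
  linarith

lemma ch4 {b s k : ℕ} (hk : 1 ≤ k) :
    b.choose k + s * b.choose (k - 1) ≤ (b + s).choose k := by
  induction s with
  | zero => simp
  | succ s ih =>
    obtain ⟨a, rfl⟩ : ∃ a, k = a + 1 := ⟨k - 1, by omega⟩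
    have h3 := Nat.choose_succ_succ (b + s) a
    simp only [Nat.succ_eq_add_one] at h3
    rw [Nat.add_sub_cancel] at ih ⊢
    have h4 : b.choose a ≤ (b + s).choose a := Nat.choose_le_choose a (by omega)
    have h5 : (s + 1) * b.choose a = s * b.choose a + b.choose a := by ring
    rw [← Nat.add_assoc]
    omega

end Numeric

section Main

variable {r : ℕ}

set_option maxHeartbeats 2000000 in
/-- High degree vertices extend: removing few vertices but not `v` leaves a copy of `F`. -/
lemma high_degree_copy (hr : 2 ≤ r) {F H : HGraph r} {n N q : ℕ} {p c η δ : ℝ}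
    (hp0 : 0 < p) (hη0 : 0 < η) (hη1 : η ≤ 1) (hc : 0 < c)
    (hδ0 : 0 < δ) (hδc : δ ≤ c / 8) (hδη : δ ≤ η / 8)
    (hnN : 2 * N ≤ n) (hnr : 2 * r ≤ n)
    (hup : ∀ j, N ≤ j → (exN r j F : ℝ) ≤ (p + δ) * (j.choose r : ℝ))
    (hbd : ∀ j, N ≤ j → BoundedAt r j F (c * (j.choose (r-1) : ℝ)) (η / 4 * (j.choose (r-1) : ℝ)))
    (hq1 : (r : ℝ) * q ≤ c * n / 8) (hq2 : (r : ℝ) * q ≤ η * n / 64)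
    (hn : H.verts.card = n)
    (hE : (p - δ) * (n.choose r : ℝ) ≤ (H.edges.card : ℝ))
    {U : Finset ℕ} (hU : U ⊆ H.verts) (hUq : U.card ≤ q) {v : ℕ} (hv : v ∈ H.verts) (hvU : v ∉ U)
    (hdeg : (p + η / 2) * (n.choose (r-1) : ℝ) ≤ (H.deg v : ℝ)) :
    F.IsCopyIn (H.induce (H.verts \ U)) := by
  by_contra hfree
  set u := U.card with hu
  have hun : u ≤ n := by rw [← hn]; exact Finset.card_le_card hU
  have hr' : (2 : ℝ) ≤ r := by exact_mod_cast hr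
  have hn1 : 1 ≤ n := by omega
  have hn0 : (0 : ℝ) < n := by exact_mod_cast hn1
  have hu0 : (0 : ℝ) ≤ u := Nat.cast_nonneg u
  have huq' : (u : ℝ) ≤ q := by exact_mod_cast hUq
  have hru1 : (r : ℝ) * u ≤ c * n / 8 := le_trans (by gcongr) hq1
  have hru2 : (r : ℝ) * u ≤ η * n / 64 := le_trans (by gcongr) hq2
  have hηn : η * n ≤ n := by nlinarith
  have hu64 : (u : ℝ) ≤ n / 64 := by nlinarith
  have hn'N : N ≤ n - u := by
    have : 64 * u ≤ n := by
      have : (64 : ℝ) * u ≤ n := by linarith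
      exact_mod_cast this
    omega
  have hn'1 : 1 ≤ n - u := by
    have : 64 * u ≤ n := by
      have : (64 : ℝ) * u ≤ n := by linarith
      exact_mod_cast this
    omega
  have hcast : ((n - u : ℕ) : ℝ) = n - u := by push_cast [hun]; ring
  have hn'0 : (0 : ℝ) < ((n - u : ℕ) : ℝ) := by exact_mod_cast hn'1
  have hV : (H.induce (H.verts \ U)).verts = H.verts \ U := by
    rw [HGraph.verts_induce]; exact Finset.inter_eq_right.mpr Finset.sdiff_subset
  have hVc : (H.induce (H.verts \ U)).verts.card = n - u := by
    rw [hV, Finset.card_sdiff_of_subset hU, hn]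
  -- binomials
  have hX0 : (0 : ℝ) < (n.choose (r-1) : ℝ) := by
    exact_mod_cast Nat.choose_pos (by omega)
  have hX1 : ((n-1).choose (r-1) : ℝ) ≤ (n.choose (r-1) : ℝ) := by
    exact_mod_cast Nat.choose_le_choose _ (by omega)
  have hX' : ((n-u).choose (r-1) : ℝ) ≤ (n.choose (r-1) : ℝ) := by
    exact_mod_cast Nat.choose_le_choose _ (by omega)
  have hX'' : ((n-u-1).choose (r-1) : ℝ) ≤ (n.choose (r-1) : ℝ) := by
    exact_mod_cast Nat.choose_le_choose _ (by omega)
  have hXr : ((n-u).choose r : ℝ) ≤ (n.choose r : ℝ) := by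
    exact_mod_cast Nat.choose_le_choose _ (by omega)
  have hrC := ch1 (n := n) (k := r) hn1 (by omega)
  have hrC' := ch1 (n := n - u) (k := r) hn'1 (by omega)
  have hc3 := ch3 (n := n) (u := u) (k := r - 1) hun hn1 (by omega)
  have hr1 : ((r - 1 : ℕ) : ℝ) = r - 1 := by push_cast [show 1 ≤ r by omega]; ring
  have hfrac : (u : ℝ) * ((r - 1 : ℕ) : ℝ) / n ≤ η / 64 := by
    rw [div_le_iff₀ hn0, hr1]
    nlinarith
  set X : ℝ := (n.choose (r-1) : ℝ) with hXdef
  set X' : ℝ := ((n-u).choose (r-1) : ℝ) with hX'def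
  have hX'low : X * (63 / 64) ≤ X' := by
    refine le_trans ?_ hc3
    apply mul_le_mul_of_nonneg_left _ hX0.le
    linarith
  -- edges
  have hcount : (H.edges.card : ℝ) ≤ ((H.induce (H.verts \ U)).edges.card : ℝ) +
      u * ((n-1).choose (r-1) : ℝ) := by
    have h1 := H.count_remove H.verts U
    rw [HGraph.induce_verts_edges] at h1
    have h2 : ∑ w ∈ U, H.deg w ≤ u * (n-1).choose (r-1) := by
      rw [hu, ← smul_eq_mul]
      apply Finset.sum_le_card_nsmul
      intro w hw
      have := H.deg_le (hU hw)
      rwa [hn] at this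
    exact_mod_cast h1.trans (Nat.add_le_add_left h2 _)
  have hexn' := hup (n - u) hn'N
  have havg : dN r (n - u) F - c * X' ≤ (H.induce (H.verts \ U)).avgDeg := by
    unfold dN HGraph.avgDeg
    rw [hVc, sub_le_iff_le_add, div_le_iff₀ hn'0, add_mul, div_mul_cancel₀ _ hn'0.ne']
    have e1 : (r : ℝ) * (exN r (n - u) F : ℝ) ≤ (p + δ) * ((r : ℝ) * (n.choose r : ℝ)) := by
      have : (exN r (n - u) F : ℝ) ≤ (p + δ) * (n.choose r : ℝ) :=
        hexn'.trans (mul_le_mul_of_nonneg_left hXr (by linarith))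
      have h2 := mul_le_mul_of_nonneg_left this (show (0:ℝ) ≤ r by linarith)
      linarith
    have e2 : (p - δ) * ((r : ℝ) * (n.choose r : ℝ)) - r * u * X ≤
        r * ((H.induce (H.verts \ U)).edges.card : ℝ) := by
      have a1 : (p - δ) * (n.choose r : ℝ) - u * X ≤ ((H.induce (H.verts \ U)).edges.card : ℝ) := by
        have := mul_le_mul_of_nonneg_left hX1 hu0
        linarith
      have a2 := mul_le_mul_of_nonneg_left a1 (show (0:ℝ) ≤ r by linarith)
      linarith
    have e3 : (r : ℝ) * (n.choose r : ℝ) ≤ n * X := by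
      rw [← hrC]
      exact mul_le_mul_of_nonneg_left hX1 hn0.le
    have e4 : 2 * δ * ((r : ℝ) * (n.choose r : ℝ)) ≤ c / 4 * (n * X) := by
      apply mul_le_mul (by linarith) e3 (by positivity) (by positivity)
    have e5 : (r : ℝ) * u * X ≤ c / 8 * (n * X) := by
      have := mul_le_mul_of_nonneg_right hru1 hX0.le
      linarith
    have e6 : c / 2 * (n * X) ≤ c * X' * ((n - u : ℕ) : ℝ) := by
      have b1 : (n : ℝ) * (63 / 64) ≤ ((n - u : ℕ) : ℝ) := by rw [hcast]; linarith
      have b2 : X * (63 / 64) * (n * (63 / 64)) ≤ X' * ((n - u : ℕ) : ℝ) :=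
        mul_le_mul hX'low b1 (by positivity) (by positivity)
      have b3 := mul_le_mul_of_nonneg_left b2 hc.le
      have b4 : 0 ≤ c * (n * X) := by positivity
      linarith
    have e7 : 0 ≤ c * (n * X) := by positivity
    linarith
  have hmax := hbd (n - u) hn'N _ hVc hfree havg
  have hdv : (H.induce (H.verts \ U)).deg v ≤ (H.induce (H.verts \ U)).maxDeg := by
    unfold HGraph.maxDeg
    apply Finset.le_sup (f := (H.induce (H.verts \ U)).deg)
    rw [hV]
    exact Finset.mem_sdiff.mpr ⟨hv, hvU⟩
  have hdv' : ((H.induce (H.verts \ U)).deg v : ℝ) ≤ ((H.induce (H.verts \ U)).maxDeg : ℝ) := by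
    exact_mod_cast hdv
  have hdd : (H.deg v : ℝ) ≤ ((H.induce (H.verts \ U)).deg v : ℝ) + η / 64 * X := by
    have h1 := H.deg_induce hv hvU hU
    rw [hn] at h1
    have h1' : (H.deg v : ℝ) ≤ ((H.induce (H.verts \ U)).deg v : ℝ) +
      u * ((n - 2).choose (r - 2) : ℝ) := by exact_mod_cast h1
    have h2 : ((n - 2).choose (r - 2) : ℝ) ≤ ((n - 1).choose (r - 1 - 1) : ℝ) := by
      exact_mod_cast Nat.choose_le_choose _ (by omega)
    have h3 := ch1 (n := n) (k := r - 1) hn1 (by omega)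
    have h4 : ((n - 1).choose (r - 1 - 1) : ℝ) = ((r - 1 : ℕ) : ℝ) * X / n := by
      rw [eq_div_iff hn0.ne', mul_comm]
      exact h3
    have h5 : (u : ℝ) * ((n - 2).choose (r - 2) : ℝ) ≤ η / 64 * X := by
      calc (u : ℝ) * ((n - 2).choose (r - 2) : ℝ)
          ≤ u * (((r - 1 : ℕ) : ℝ) * X / n) := by
            rw [← h4]; exact mul_le_mul_of_nonneg_left h2 hu0
        _ = (u : ℝ) * ((r - 1 : ℕ) : ℝ) / n * X := by ring
        _ ≤ η / 64 * X := mul_le_mul_of_nonneg_right hfrac hX0.le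
    linarith
  have hdN : dN r (n - u) F ≤ (p + δ) * X := by
    unfold dN
    rw [div_le_iff₀ hn'0]
    have a1 : (r : ℝ) * (exN r (n - u) F : ℝ) ≤ (p + δ) * (r * ((n-u).choose r : ℝ)) := by
      have := mul_le_mul_of_nonneg_left hexn' (show (0:ℝ) ≤ r by linarith)
      linarith
    rw [← hrC'] at a1
    refine a1.trans ?_
    have a2 : ((n - u : ℕ) : ℝ) * ((n-u-1).choose (r-1) : ℝ) ≤ X * ((n - u : ℕ) : ℝ) := by
      rw [mul_comm]; exact mul_le_mul_of_nonneg_right hX'' hn'0.le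
    have := mul_le_mul_of_nonneg_left a2 (show 0 ≤ p + δ by linarith)
    linarith
  have hηX : 0 < η * X := by positivity
  have hδX : δ * X ≤ η / 8 * X := mul_le_mul_of_nonneg_right hδη hX0.le
  have hηX' : η / 4 * X' ≤ η / 4 * X := mul_le_mul_of_nonneg_left hX' (by linarith)
  linarith

set_option maxHeartbeats 1000000 in
/-- Growth of the Turán number from smoothness. -/
lemma growth (hr : 2 ≤ r) {F : HGraph r} {n N q : ℕ} {p η δ : ℝ}
    (hp0 : 0 < p) (hp1 : p ≤ 1) (hη0 : 0 < η) (hη1 : η ≤ 1)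
    (hδ0 : 0 < δ) (hδη : δ ≤ η / 8)
    (hnN : 2 * N + 4 ≤ n) (hnr : 2 * r ≤ n)
    (hlo : ∀ j, N ≤ j → (p - δ) * (j.choose r : ℝ) ≤ (exN r j F : ℝ))
    (hsm : ∀ j, N ≤ j → SmoothAt r j F (η / 8 * (j.choose (r-1) : ℝ)))
    (hq0 : 1 ≤ q) (hq2 : (r : ℝ) * q ≤ η * n / 64) (b s : ℕ) (hb : n ≤ b + q) (hbs : b + s ≤ n) :
    (exN r b F : ℝ) + s * ((p - 9 * η / 32) * (n.choose (r-1) : ℝ)) ≤ (exN r (b + s) F : ℝ) := by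
  have hn1 : 1 ≤ n := by omega
  have hn0 : (0 : ℝ) < n := by exact_mod_cast hn1
  have hr' : (2 : ℝ) ≤ r := by exact_mod_cast hr
  have hηn : η * n ≤ n := by nlinarith
  have hq' : (1 : ℝ) ≤ q := by exact_mod_cast hq0
  have hq64 : 64 * q ≤ n := by
    have : (64 : ℝ) * q ≤ n := by nlinarith
    exact_mod_cast this
  have hX0 : (0 : ℝ) < (n.choose (r-1) : ℝ) := by
    exact_mod_cast Nat.choose_pos (by omega)
  have hr1 : ((r - 1 : ℕ) : ℝ) = r - 1 := by push_cast [show 1 ≤ r by omega]; ring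
  induction s with
  | zero => simp
  | succ s ih =>
    have ih' := ih (by omega)
    set j := b + s + 1 with hj
    have hs := hsm j (by omega)
    unfold SmoothAt deltaN at hs
    have hj1 : j - 1 = b + s := by omega
    rw [hj1] at hs
    have hs' := (abs_le.mp hs).1
    have hlo' := hlo (b + s) (by omega)
    have hbs1 : 1 ≤ b + s := by omega
    have hbs0 : (0 : ℝ) < ((b + s : ℕ) : ℝ) := by exact_mod_cast hbs1
    have hrC := ch1 (n := b + s) (k := r) hbs1 (by omega)
    have hdN : (p - δ) * ((b + s - 1).choose (r-1) : ℝ) ≤ dN r (b + s) F := by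
      unfold dN
      rw [le_div_iff₀ hbs0]
      have := mul_le_mul_of_nonneg_left hlo' (show (0:ℝ) ≤ r by linarith)
      have h2 : (p - δ) * ((b + s - 1).choose (r-1) : ℝ) * ((b + s : ℕ) : ℝ) =
        (p - δ) * (((b + s : ℕ) : ℝ) * ((b + s - 1).choose (r-1) : ℝ)) := by ring
      rw [h2, hrC]
      linarith
    have hc3 := ch3 (n := n) (u := n - (b + s - 1)) (k := r - 1) (by omega) hn1 (by omega)
    have hnn : n - (n - (b + s - 1)) = b + s - 1 := by omega
    rw [hnn] at hc3
    have hfrac : ((n - (b + s - 1) : ℕ) : ℝ) * ((r - 1 : ℕ) : ℝ) / n ≤ η / 32 := by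
      rw [div_le_iff₀ hn0, hr1]
      have h1 : ((n - (b + s - 1) : ℕ) : ℝ) ≤ 2 * q := by
        have : n - (b + s - 1) ≤ 2 * q := by omega
        exact_mod_cast this
      have h2 : ((n - (b + s - 1) : ℕ) : ℝ) * (r - 1) ≤ 2 * q * (r - 1) :=
        mul_le_mul_of_nonneg_right h1 (by linarith)
      nlinarith
    have hY1 : ((b + s - 1).choose (r-1) : ℝ) ≤ (n.choose (r-1) : ℝ) := by
      exact_mod_cast Nat.choose_le_choose _ (by omega)
    have hZ : (j.choose (r-1) : ℝ) ≤ (n.choose (r-1) : ℝ) := by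
      exact_mod_cast Nat.choose_le_choose _ (by omega)
    set X : ℝ := (n.choose (r-1) : ℝ) with hXdef
    set Y : ℝ := ((b + s - 1).choose (r-1) : ℝ) with hYdef
    have hY2 : X * (1 - η / 32) ≤ Y := by
      refine le_trans ?_ hc3
      apply mul_le_mul_of_nonneg_left _ hX0.le
      linarith
    have g1 : p * (X * (1 - η / 32)) ≤ p * Y := mul_le_mul_of_nonneg_left hY2 hp0.le
    have g2 : δ * Y ≤ η / 8 * X := mul_le_mul hδη hY1 (by positivity) (by linarith)
    have g3 : η / 8 * (j.choose (r-1) : ℝ) ≤ η / 8 * X :=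
      mul_le_mul_of_nonneg_left hZ (by linarith)
    have g4 : p * (η * X) ≤ η * X := by
      have : 0 ≤ η * X := by positivity
      nlinarith
    have hstep : (p - 9 * η / 32) * X ≤ (exN r j F : ℝ) - (exN r (b + s) F : ℝ) := by
      linarith
    have hbs' : b + (s + 1) = j := by omega
    rw [hbs']
    push_cast
    linarith

end Main
section Key

variable {r : ℕ}

/-- Large degree vertices can be absorbed greedily. -/
lemma absorb {F H : HGraph r} {t m : ℕ} (hm : 1 ≤ m) (hFm : F.verts.card = m)
    (hH : ¬ F.HasMatching H (t+1)) {L : Finset ℕ} (hL : L ⊆ H.verts)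
    (hcopy : ∀ U : Finset ℕ, U ⊆ H.verts → U.card ≤ t * m → ∀ v ∈ L, v ∉ U →
      F.IsCopyIn (H.induce (H.verts \ U))) :
    ∀ l : ℕ, ∀ L' : Finset ℕ, L' ⊆ L → L'.card = l → l ≤ t + 1 →
      ¬ HGraph.Mat F H (t + 1 - l) (H.verts \ L') := by
  classical
  intro l
  induction l with
  | zero =>
    intro L' _ _ _ hM
    exact hH hM.hasMatching
  | succ l ih =>
    intro L' hL' hcard hl hM
    obtain ⟨v, L'', hv, hins, hc⟩ := Finset.card_eq_succ.mp hcard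
    have hvL' : v ∈ L' := by rw [← hins]; exact Finset.mem_insert_self _ _
    have hL''L' : L'' ⊆ L' := by rw [← hins]; exact Finset.subset_insert _ _
    apply ih L'' (hL''L'.trans hL') hc (by omega)
    obtain ⟨A, hk, h1, h2⟩ := hM
    have hA : t + 1 - l = A.card + 1 := by omega
    rw [hA]
    have hsub : H.verts \ L' ⊆ H.verts \ L'' := Finset.sdiff_subset_sdiff (le_refl _) hL''L'
    apply HGraph.Mat.extend (by omega) h1 h2 hsub
    have hU := HGraph.mat_union_card h1
    have heq : (H.verts \ L'') \ A.biUnion id = H.verts \ (A.biUnion id ∪ L'') := by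
      ext x; simp only [Finset.mem_sdiff, Finset.mem_union]; tauto
    rw [heq]
    apply hcopy _ _ _ v (hL' hvL')
    · intro hmem
      rcases Finset.mem_union.mp hmem with h | h
      · obtain ⟨S, hS, hvS⟩ := Finset.mem_biUnion.mp h
        have := (h1 S hS).2.1 hvS
        exact (Finset.mem_sdiff.mp this).2 hvL'
      · exact hv h
    · apply Finset.union_subset
      · intro x hx
        obtain ⟨S, hS, hxS⟩ := Finset.mem_biUnion.mp hx
        exact (h1 S hS).1 hxS
      · exact (hL''L'.trans hL').trans hL
    · refine (Finset.card_union_le _ _).trans ?_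
      rw [hFm] at hU
      have h3 : l ≤ l * m := Nat.le_mul_of_pos_right l hm
      have h4 : A.card * m + l * m = t * m := by rw [← Nat.add_mul]; congr 1; omega
      omega

set_option maxHeartbeats 2000000 in
/-- The key structural lemma for `t ≥ 1`. -/
lemma key_pos (hr : 2 ≤ r) {F H : HGraph r} {n N t m : ℕ} {p c η δ : ℝ}
    (hm : 1 ≤ m) (hFm : F.verts.card = m) (ht1 : 1 ≤ t)
    (hp0 : 0 < p) (hη0 : 0 < η) (hη1 : η ≤ 1) (hmη : m * η = 1 - p) (hc : 0 < c)
    (hδ0 : 0 < δ) (hδc : δ ≤ c / 8) (hδη : δ ≤ η / 8)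
    (hnN : 2 * N + 4 ≤ n) (hnr : 2 * r ≤ n)
    (hup : ∀ j, N ≤ j → (exN r j F : ℝ) ≤ (p + δ) * (j.choose r : ℝ))
    (hlo : ∀ j, N ≤ j → (p - δ) * (j.choose r : ℝ) ≤ (exN r j F : ℝ))
    (hbd : ∀ j, N ≤ j → BoundedAt r j F (c * (j.choose (r-1) : ℝ)) (η / 4 * (j.choose (r-1) : ℝ)))
    (hsm : ∀ j, N ≤ j → SmoothAt r j F (η / 8 * (j.choose (r-1) : ℝ)))
    (hq1 : (r : ℝ) * ((t * m : ℕ) : ℝ) ≤ c * n / 8)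
    (hq2 : (r : ℝ) * ((t * m : ℕ) : ℝ) ≤ η * n / 64)
    (hn : H.verts.card = n) (hH : ¬ F.HasMatching H (t+1))
    (hE : n.choose r - (n - t).choose r + exN r (n - t) F ≤ H.edges.card) :
    ∃ L ⊆ H.verts, L.card = t ∧ ¬ F.IsCopyIn (H.induce (H.verts \ L)) := by
  classical
  have hn1 : 1 ≤ n := by omega
  have hn0 : (0 : ℝ) < n := by exact_mod_cast hn1
  have hr' : (2 : ℝ) ≤ r := by exact_mod_cast hr
  have hηn : η * n ≤ n := by nlinarith
  have hq64 : 64 * (t * m) ≤ n := by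
    have h0 : (0 : ℝ) ≤ ((t * m : ℕ) : ℝ) := Nat.cast_nonneg _
    have : (64 : ℝ) * ((t * m : ℕ) : ℝ) ≤ n := by nlinarith
    exact_mod_cast this
  have htq : t ≤ t * m := Nat.le_mul_of_pos_right t hm
  have htn : t ≤ n := by omega
  have hX0 : (0 : ℝ) < (n.choose (r-1) : ℝ) := by
    exact_mod_cast Nat.choose_pos (by omega)
  have hp1 : 0 < 1 - p := by
    rw [← hmη]
    have : (0 : ℝ) < m := by exact_mod_cast hm
    positivity
  -- lower bound on the number of edges
  have hCle : (n - t).choose r ≤ n.choose r := Nat.choose_le_choose _ (by omega)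
  have hE' : (n.choose r : ℝ) - ((n - t).choose r : ℝ) + (exN r (n - t) F : ℝ) ≤ H.edges.card := by
    have : n.choose r + exN r (n - t) F ≤ H.edges.card + (n - t).choose r := by omega
    have h2 : (n.choose r : ℝ) + (exN r (n - t) F : ℝ) ≤ H.edges.card + ((n - t).choose r : ℝ) := by
      exact_mod_cast this
    linarith
  have hElow : (p - δ) * (n.choose r : ℝ) ≤ (H.edges.card : ℝ) := by
    have h1 := hlo (n - t) (by omega)
    have h2 : ((n - t).choose r : ℝ) ≤ (n.choose r : ℝ) := by exact_mod_cast hCle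
    have h3 : (p - δ) * ((n.choose r : ℝ) - ((n - t).choose r : ℝ)) ≤
        1 * ((n.choose r : ℝ) - ((n - t).choose r : ℝ)) :=
      mul_le_mul_of_nonneg_right (by linarith) (by linarith)
    linarith
  -- large degree vertices
  set L := H.verts.filter (fun v => (p + η / 2) * (n.choose (r-1) : ℝ) ≤ (H.deg v : ℝ)) with hLdef
  have hLV : L ⊆ H.verts := Finset.filter_subset _ _
  have hcopy : ∀ U : Finset ℕ, U ⊆ H.verts → U.card ≤ t * m → ∀ v ∈ L, v ∉ U →
      F.IsCopyIn (H.induce (H.verts \ U)) := by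
    intro U hU hUq v hv hvU
    have hv' := Finset.mem_filter.mp hv
    exact high_degree_copy hr hp0 hη0 hη1 hc hδ0 hδc hδη (by omega) hnr hup hbd hq1 hq2 hn hElow
      hU hUq hv'.1 hvU hv'.2
  have habs := absorb hm hFm hH hLV hcopy
  have hLt : L.card ≤ t := by
    by_contra hcon
    obtain ⟨L', hL', hc'⟩ := Finset.exists_subset_card_eq (show t + 1 ≤ L.card by omega)
    apply habs (t + 1) L' hL' hc' le_rfl
    rw [Nat.sub_self]
    exact ⟨∅, by simp, by simp, by simp⟩
  obtain ⟨k, hk⟩ : ∃ k, t = L.card + k := ⟨t - L.card, by omega⟩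
  set l := L.card with hl
  have hnomat : ¬ HGraph.Mat F H (k + 1) (H.verts \ L) := by
    have := habs l L (le_refl _) rfl (by omega)
    rwa [show t + 1 - l = k + 1 by omega] at this
  have hVL : (H.verts \ L).card = n - l := by
    rw [Finset.card_sdiff_of_subset hLV, hn]
  have hlm : l ≤ l * m := Nat.le_mul_of_pos_right l hm
  have hsum : l * m + k * m = t * m := by rw [← Nat.add_mul, ← hk]
  obtain ⟨B, hB, hBc, hfree⟩ := HGraph.exists_cover (by omega) hnomat
    (by rw [hVL, hFm]; omega)
  rw [hFm] at hBc
  rcases Nat.eq_zero_or_pos k with hk0 | hkpos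
  · have hB0 : B = ∅ := by
      rw [← Finset.card_eq_zero, hBc, hk0, Nat.zero_mul]
    rw [hB0, Finset.sdiff_empty] at hfree
    exact ⟨L, hLV, by omega, hfree⟩
  exfalso
  -- counting
  have hc1 := H.card_le_split hLV
  rw [hn, ← hl] at hc1
  have hCl : (n - l).choose r ≤ n.choose r := Nat.choose_le_choose _ (by omega)
  have hc1' : (H.edges.card : ℝ) ≤ ((H.induce (H.verts \ L)).edges.card : ℝ) +
      ((n.choose r : ℝ) - ((n - l).choose r : ℝ)) := by
    have : H.edges.card + (n - l).choose r ≤ (H.induce (H.verts \ L)).edges.card + n.choose r := by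
      omega
    have h2 : (H.edges.card : ℝ) + ((n - l).choose r : ℝ) ≤
      ((H.induce (H.verts \ L)).edges.card : ℝ) + (n.choose r : ℝ) := by exact_mod_cast this
    linarith
  have hc2 := H.count_remove (H.verts \ L) B
  have hc3 : ((∑ u ∈ B, H.deg u : ℕ) : ℝ) ≤ (k * m : ℝ) * ((p + η / 2) * (n.choose (r-1) : ℝ)) := by
    push_cast
    have hb : (k * m : ℝ) = (B.card : ℝ) := by rw [hBc]; push_cast; ring
    rw [hb, ← nsmul_eq_mul]
    apply Finset.sum_le_card_nsmul
    intro w hw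
    have hwm := Finset.mem_sdiff.mp (hB hw)
    by_contra hcon
    exact hwm.2 (Finset.mem_filter.mpr ⟨hwm.1, (not_le.mp hcon).le⟩)
  have hsubV : (H.verts \ L) \ B ⊆ H.verts := Finset.sdiff_subset.trans Finset.sdiff_subset
  have hvc : (H.induce ((H.verts \ L) \ B)).verts.card = n - l - k * m := by
    rw [HGraph.verts_induce, Finset.inter_eq_right.mpr hsubV, Finset.card_sdiff_of_subset hB, hVL,
      hBc]
  have hc4 := le_exN hvc hfree
  set b := n - l - k * m with hbdef
  have hc5 : ((H.induce (H.verts \ L)).edges.card : ℝ) ≤ (exN r b F : ℝ) +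
      (k * m : ℝ) * ((p + η / 2) * (n.choose (r-1) : ℝ)) := by
    have : (H.induce (H.verts \ L)).edges.card ≤ exN r b F + ∑ u ∈ B, H.deg u := by omega
    have h2 : ((H.induce (H.verts \ L)).edges.card : ℝ) ≤
      (exN r b F : ℝ) + ((∑ u ∈ B, H.deg u : ℕ) : ℝ) := by exact_mod_cast this
    linarith
  have hkm : k * m = k + k * (m - 1) := by
    obtain ⟨m', rfl⟩ : ∃ m', m = m' + 1 := ⟨m - 1, by omega⟩
    rw [Nat.add_sub_cancel]; ring
  have hbs : b + k * (m - 1) = n - t := by omega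
  have hg := growth hr hp0 (by linarith) hη0 hη1 hδ0 hδη hnN hnr hlo hsm
    (show 1 ≤ t * m by omega) hq2 b (k * (m - 1)) (by omega) (by omega)
  rw [hbs] at hg
  have h4 := ch4 (b := n - t) (s := k) (k := r) (by omega)
  rw [show n - t + k = n - l by omega] at h4
  have h4' : ((n - t).choose r : ℝ) + k * ((n - t).choose (r - 1) : ℝ) ≤ ((n - l).choose r : ℝ) := by
    exact_mod_cast h4
  have h3 := ch3 (n := n) (u := t) (k := r - 1) htn hn1 (by omega)
  have hr1 : ((r - 1 : ℕ) : ℝ) = r - 1 := by push_cast [show 1 ≤ r by omega]; ring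
  have hfrac : (t : ℝ) * ((r - 1 : ℕ) : ℝ) / n ≤ η / 64 := by
    rw [div_le_iff₀ hn0, hr1]
    have htq' : (t : ℝ) ≤ ((t * m : ℕ) : ℝ) := by exact_mod_cast htq
    have ht0 : (0 : ℝ) ≤ (t : ℝ) := Nat.cast_nonneg _
    have := mul_le_mul_of_nonneg_left htq' (show (0:ℝ) ≤ r by linarith)
    linarith
  have hm1 : ((k * (m - 1) : ℕ) : ℝ) = k * (m - 1) := by push_cast [hm]; ring
  rw [hm1] at hg
  have hk0 : (0 : ℝ) < k := by exact_mod_cast hkpos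
  set X : ℝ := (n.choose (r-1) : ℝ) with hXdef
  have hY : X * (1 - η / 64) ≤ ((n - t).choose (r - 1) : ℝ) := by
    refine le_trans ?_ h3
    apply mul_le_mul_of_nonneg_left _ hX0.le
    linarith
  have hkY := mul_le_mul_of_nonneg_left hY hk0.le
  have hfin : k * (X * (1 - η / 64)) + k * (m - 1) * ((p - 9 * η / 32) * X) ≤
      (k * m : ℝ) * ((p + η / 2) * X) := by
    linarith
  have hkX : 0 < k * X := mul_pos hk0 hX0
  have hid : (k * m : ℝ) * ((p + η / 2) * X) - (k * (X * (1 - η / 64)) +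
      k * (m - 1) * ((p - 9 * η / 32) * X)) =
      k * X * (25 / 32 * (m * η) - (1 - p) - 17 / 64 * η) := by ring
  rw [hmη] at hid
  have hneg : k * X * (25 / 32 * (1 - p) - (1 - p) - 17 / 64 * η) < 0 :=
    mul_neg_of_pos_of_neg hkX (by linarith)
  linarith

end Key

/-- the general density Corrádi–Hajnal theorem for a nondegenerate
bounded & smooth `r`-graph `F`. -/
theorem statement_0 (m r : ℕ) (hr : 2 ≤ r) (hrm : r ≤ m)
    (F : HGraph r) (hFm : F.verts.card = m)
    (π : ℝ) (hπ : HasTuranDensity r F π) (hπ0 : 0 < π)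
    (c : ℝ) (hc : 0 < c)
    (hcond : ∀ᶠ n : ℕ in atTop,
      BoundedAt r n F (c * (n.choose (r-1) : ℝ))
        ((1 - π) / (4 * m) * (n.choose (r-1) : ℝ)) ∧
      SmoothAt r n F ((1 - π) / (8 * m) * (n.choose (r-1) : ℝ))) :
    ∃ N₀ : ℕ, ∀ n : ℕ, N₀ ≤ n → ∀ t : ℕ,
      (t : ℝ) ≤ min (c * n / (4 * Real.exp 1 * r * m)) ((1 - π) * n / (64 * r * m ^ 2)) →
      (∀ H : HGraph r, IsExtremalMatchingFree r n t F H ↔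
          ∃ G : HGraph r, IsExtremalFree r (n - t) F G ∧
            Disjoint G.verts (Finset.range t) ∧
            H.Iso ((completeOn r (Finset.range t)).join G)) ∧
      exMatchN r n t F = n.choose r - (n - t).choose r + exN r (n - t) F := by
  have hFne := edges_nonempty_of_density hπ hπ0
  have hm1 : 1 ≤ m := by omega
  have hm0 : (0 : ℝ) < m := by exact_mod_cast hm1
  have hr0 : (0 : ℝ) < r := by exact_mod_cast (show 0 < r by omega)
  -- the case `t = 0`
  have hzero : ∀ n : ℕ, ∀ H : HGraph r, H.verts.card = n → ¬ F.HasMatching H (0+1) →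
      n.choose r - (n - 0).choose r + exN r (n - 0) F ≤ H.edges.card →
      ∃ L ⊆ H.verts, L.card = 0 ∧ ¬ F.IsCopyIn (H.induce (H.verts \ L)) := by
    intro n H _ hH _
    refine ⟨∅, Finset.empty_subset _, rfl, ?_⟩
    intro hcopy
    apply hH
    have := HGraph.Mat.extend (F := F) (H := H) (by omega) (W := H.verts) (W' := H.verts)
      (A := ∅) (by simp) (by simp) (le_refl _) (by simpa using hcopy)
    exact this.hasMatching
  rcases le_or_gt (1 - π) 0 with hpi | hpi
  · refine ⟨0, fun n _ t ht => ?_⟩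
    have ht2 := ht.trans (min_le_right _ _)
    have h1 : (1 - π) * n / (64 * r * m ^ 2) ≤ 0 := by
      apply div_nonpos_of_nonpos_of_nonneg
      · exact mul_nonpos_of_nonpos_of_nonneg hpi (Nat.cast_nonneg n)
      · positivity
    have ht0 : t = 0 := by
      have : (t : ℝ) ≤ 0 := ht2.trans h1
      have : t ≤ 0 := by exact_mod_cast this
      omega
    subst ht0
    exact conclude (by omega) (Nat.zero_le _) hFne (hzero n)
  set η : ℝ := (1 - π) / m with hη
  have hη0 : 0 < η := div_pos hpi hm0
  have hmη : m * η = 1 - π := by rw [hη]; field_simp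
  have hm1' : (1 : ℝ) ≤ m := by exact_mod_cast hm1
  have hη1 : η ≤ 1 := by
    rw [hη, div_le_one hm0]
    linarith
  set δ : ℝ := min (c / 8) (η / 8) with hδ
  have hδ0 : 0 < δ := lt_min (by linarith) (by linarith)
  have hδc : δ ≤ c / 8 := min_le_left _ _
  have hδη : δ ≤ η / 8 := min_le_right _ _
  have hdens : ∀ᶠ j : ℕ in atTop, |(exN r j F : ℝ) / (j.choose r : ℝ) - π| < δ := by
    have := (Metric.tendsto_nhds.mp hπ) δ hδ0
    simpa only [Real.dist_eq] using this
  obtain ⟨N, hN⟩ := eventually_atTop.mp (hdens.and (hcond.and (eventually_ge_atTop r)))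
  have hpos : ∀ j, N ≤ j → (0 : ℝ) < (j.choose r : ℝ) := by
    intro j hj
    exact_mod_cast Nat.choose_pos (hN j hj).2.2
  have hup : ∀ j, N ≤ j → (exN r j F : ℝ) ≤ (π + δ) * (j.choose r : ℝ) := by
    intro j hj
    have h1 := (abs_lt.mp (hN j hj).1).2
    rw [← div_le_iff₀ (hpos j hj)]
    linarith
  have hlo : ∀ j, N ≤ j → (π - δ) * (j.choose r : ℝ) ≤ (exN r j F : ℝ) := by
    intro j hj
    have h1 := (abs_lt.mp (hN j hj).1).1
    rw [← le_div_iff₀ (hpos j hj)]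
    linarith
  have he4 : (1 - π) / (4 * m) = η / 4 := by rw [hη]; field_simp
  have he8 : (1 - π) / (8 * m) = η / 8 := by rw [hη]; field_simp
  have hbd : ∀ j, N ≤ j →
      BoundedAt r j F (c * (j.choose (r-1) : ℝ)) (η / 4 * (j.choose (r-1) : ℝ)) := by
    intro j hj
    have := (hN j hj).2.1.1
    rwa [he4] at this
  have hsm : ∀ j, N ≤ j → SmoothAt r j F (η / 8 * (j.choose (r-1) : ℝ)) := by
    intro j hj
    have := (hN j hj).2.1.2
    rwa [he8] at this
  refine ⟨2 * N + 2 * r + 4, fun n hn t ht => ?_⟩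
  rcases Nat.eq_zero_or_pos t with ht0 | htpos
  · subst ht0
    exact conclude (by omega) (Nat.zero_le _) hFne (hzero n)
  have ht1 := ht.trans (min_le_left _ _)
  have ht2 := ht.trans (min_le_right _ _)
  have hexp : (2 : ℝ) ≤ Real.exp 1 := by
    have := Real.add_one_le_exp (1 : ℝ)
    linarith
  rw [le_div_iff₀ (by positivity)] at ht1 ht2
  have ht0 : (0 : ℝ) ≤ t := Nat.cast_nonneg t
  have hq1 : (r : ℝ) * ((t * m : ℕ) : ℝ) ≤ c * n / 8 := by
    push_cast
    have h0 : 0 ≤ (t : ℝ) * r * m := by positivity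
    have h1 : (t : ℝ) * r * m * 2 ≤ t * r * m * Real.exp 1 := mul_le_mul_of_nonneg_left hexp h0
    linarith
  have hq2 : (r : ℝ) * ((t * m : ℕ) : ℝ) ≤ η * n / 64 := by
    push_cast
    rw [← hmη] at ht2
    have h1 : (64 * (r * (t * m)) : ℝ) * m ≤ (η * n) * m := by linarith
    have := le_of_mul_le_mul_right h1 hm0
    linarith
  have htn : t ≤ n := by
    have hr2 : (1 : ℝ) ≤ r := by exact_mod_cast (show 1 ≤ r by omega)
    have hn0 : (0 : ℝ) ≤ n := Nat.cast_nonneg n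
    have h1 : (t : ℝ) ≤ r * ((t * m : ℕ) : ℝ) := by
      push_cast
      have a1 : (t : ℝ) * 1 ≤ t * m := mul_le_mul_of_nonneg_left hm1' ht0
      have a2 : 1 * ((t : ℝ) * m) ≤ r * (t * m) :=
        mul_le_mul_of_nonneg_right hr2 (by positivity)
      linarith
    have h2 : η * n ≤ 1 * n := mul_le_mul_of_nonneg_right hη1 hn0
    have h3 : (t : ℝ) ≤ n := by linarith
    exact_mod_cast h3
  refine conclude (by omega) htn hFne ?_
  intro H hHn hH hE
  exact key_pos hr hm1 hFm htpos hπ0 hη0 hη1 hmη hc hδ0 hδc hδη (by omega) (by omega)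
    hup hlo hbd hsm hq1 hq2 hHn hH hE

end DensityCH
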